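/- arXiv:0901.0137 — 3 statements merged into one kernel-verified Lean document; each statement's English description precedes it below -/
import Mathlib

section
/- Let G be a finite nonabelian transitively commutative group with center Z = Z(G), and let M_1, …, M_k be its maximal abelian subgroups (equivalently, the distinct centralizers C_G(a_1), …, C_G(a_k) of noncentral elements, which cover G). Let G(2) be the amalgamated free product of M_1, …, M_k along the common central subgroup Z (the pushout, in the category of groups, of the inclusions Z ↪ M_i), and let π : G(2) → G be the canonical homomorphism induced by the inclusions M_i ≤ G. Then the kernel of π is a free group of rank N_G = 1 − [G : Z] + Σ_{i=1}^{k} ([G : Z] − [G : M_i]). -/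
/-!
Let `P` be the amalgamated product, `π : P →* G` the canonical map and `H` the amalgamated subgroup.
A lift of `π` to a wreath product `X ≀ᵣ G` is a functor to `X` from the action groupoid of `P` on
`G`; call it normalized if it is trivial on the arrows of `H`. Normalized lifts can be described in
two ways. Each factor acts freely on `G`, so the restriction of a lift to a factor is a coboundary;
hence a normalized lift amounts to one arbitrary element of `X` for each factor and each coset of
`H` outside a set of representatives of the cosets of that factor. On the other hand, the action
groupoid is connected with vertex group `π.ker`, so a normalized lift amounts to a homomorphism
`π.ker →* X` and one arbitrary element of `X` for each nontrivial coset of `H`. Comparing the groups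
that carry the universal lifts shows that `F(E) ≃* π.ker * F(T)`, where `E` and `T` are these two
sets of indices. So `π.ker` is free by Nielsen–Schreier, and its rank is `|E| - |T|`.
-/

open Function Monoid RegularWreathProduct

section Wreath

variable {X Y G : Type*} [Group X] [Group Y] [Group G]

/-- The homomorphism of wreath products induced by `f : X →* Y`. -/
def wreathMap (f : X →* Y) : X ≀ᵣ G →* Y ≀ᵣ G where
  toFun w := ⟨f ∘ w.left, w.right⟩
  map_one' := by ext <;> simp
  map_mul' _ _ := by ext <;> simp

@[simp]
lemma wreathMap_left (f : X →* Y) (w : X ≀ᵣ G) : (wreathMap f w).left = f ∘ w.left := rfl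

@[simp]
lemma wreathMap_right (f : X →* Y) (w : X ≀ᵣ G) : (wreathMap f w).right = w.right := rfl

lemma wreathMap_inl (f : X →* Y) (g : G) : wreathMap f (inl g) = inl g := by
  ext <;> simp

lemma wreathMap_id : wreathMap (MonoidHom.id X) = MonoidHom.id (X ≀ᵣ G) := rfl

lemma wreathMap_comp {Z : Type*} [Group Z] (f : Y →* Z) (f' : X →* Y) :
    (wreathMap (f.comp f') : X ≀ᵣ G →* Z ≀ᵣ G) = (wreathMap f).comp (wreathMap f') := rfl

/-- The change of gauge by `x`: conjugation by the element of the base group with components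
`g ↦ x (g⁻¹ H)`. The inversion lets a function on right cosets `H g` be given on `G ⧸ H`. -/
def gaugeChange {H : Subgroup G} (x : G ⧸ H → X) : X ≀ᵣ G →* X ≀ᵣ G :=
  (MulAut.conj (⟨fun g => x (g⁻¹ : G), 1⟩ : X ≀ᵣ G)).toMonoidHom

variable {H : Subgroup G} (x : G ⧸ H → X)

lemma gaugeChange_left (w : X ≀ᵣ G) (g : G) :
    (gaugeChange x w).left g = x (g⁻¹ : G) * w.left g * (x ((w.right⁻¹ * g)⁻¹ : G))⁻¹ := by
  simp [gaugeChange]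

@[simp]
lemma gaugeChange_right (w : X ≀ᵣ G) : (gaugeChange x w).right = w.right := by
  simp [gaugeChange]

lemma gaugeChange_inl_of_mem {h : G} (hh : h ∈ H) : gaugeChange x (inl h) = inl h := by
  ext g
  · rw [gaugeChange_left]
    simp [QuotientGroup.mk_mul_of_mem _ hh]
  · simp

lemma wreathMap_gaugeChange (f : X →* Y) (w : X ≀ᵣ G) :
    wreathMap f (gaugeChange x w) = gaugeChange (f ∘ x) (wreathMap f w) := by
  ext g
  · simp [gaugeChange_left]
  · simp

lemma exists_cosetFunction_of_mul_invariant {X : Type*} {u : G → X}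
    (hu : ∀ h ∈ H, ∀ g, u (h * g) = u g) :
    ∃ x : G ⧸ H → X, ∀ g : G, x (g⁻¹ : G) = u g := by
  refine ⟨fun q => u q.out⁻¹, fun g => ?_⟩
  obtain ⟨h, hout⟩ := QuotientGroup.mk_out_eq_mul H g⁻¹
  simp only [hout, mul_inv_rev, inv_inv, hu _ (H.inv_mem h.2)]

end Wreath

section FreeActions

variable {A G X : Type*} [Group A] [Group G] [Group X] {f : A →* G}

lemma exists_orbitCoordinate (hf : Injective f) :
    ∃ α : G → A, (∀ a g, α (f a * g) = a * α g) ∧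
      ∀ g : G, ((g⁻¹ : G) : G ⧸ f.range).out = g⁻¹ * f (α g) := by
  have hout (g : G) : ∃ a, ((g⁻¹ : G) : G ⧸ f.range).out = g⁻¹ * f a := by
    obtain ⟨⟨_, a, rfl⟩, h⟩ := QuotientGroup.mk_out_eq_mul f.range g⁻¹
    exact ⟨a, h⟩
  choose α hα using hout
  refine ⟨α, fun a g => hf ?_, hα⟩
  have hmk : (((f a * g)⁻¹ : G) : G ⧸ f.range) = (g⁻¹ : G) := by
    rw [mul_inv_rev]
    exact QuotientGroup.mk_mul_of_mem _ (inv_mem ⟨a, rfl⟩)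
  have h := hα (f a * g)
  rw [hmk, hα g, mul_inv_rev, mul_assoc, mul_right_inj, eq_inv_mul_iff_mul_eq] at h
  rw [map_mul, h]

lemma exists_left_eq_mul_inv (hf : Injective f) (θ : A →* X ≀ᵣ G) (hθ : ∀ a, (θ a).right = f a) :
    ∃ u : G → X, (∀ a g, (θ a).left g = u g * (u ((f a)⁻¹ * g))⁻¹) ∧
      ∀ c : G ⧸ f.range, u c.out⁻¹ = 1 := by
  obtain ⟨α, hα, hout⟩ := exists_orbitCoordinate hf
  refine ⟨fun g => (θ (α g)).left g, fun a g => ?_, fun c => ?_⟩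
  · have h := hα a ((f a)⁻¹ * g)
    rw [mul_inv_cancel_left] at h
    simp [h, hθ]
  · have h := hout c.out⁻¹
    rw [inv_inv, QuotientGroup.out_eq', left_eq_mul, map_eq_one_iff f hf] at h
    simp [h]

end FreeActions

/-- `θ` is a normalized lift of `π` to a wreath product: it lies over `π` and is the standard
splitting on the image of `β`. Its components `(θ p).left g` are the values of a functor to `X`
from the action groupoid of `P` on `G`, trivial on the arrows coming from `B`. -/
structure IsNormalizedLift {B P G X : Type*} [Group B] [Group P] [Group G] [Group X]
    (π : P →* G) (β : B →* P) (θ : P →* X ≀ᵣ G) : Prop where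
  right_apply (p : P) : (θ p).right = π p
  apply_base (b : B) : θ (β b) = inl (π (β b))

/-- The universal property of `θ` as a normalized lift, tested on the group `X`. The test group is a
parameter so that it may vary over all universes. -/
def IsUniversalLiftFor {B P G U : Type*} [Group B] [Group P] [Group G] [Group U]
    (π : P →* G) (β : B →* P) (θ : P →* U ≀ᵣ G) (X : Type*) [Group X] : Prop :=
  ∀ θ' : P →* X ≀ᵣ G, IsNormalizedLift π β θ' → ∃! f : U →* X, (wreathMap f).comp θ = θ'

section Universal

variable {B P G U V : Type*} [Group B] [Group P] [Group G] [Group U] [Group V]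
  {π : P →* G} {β : B →* P} {θ : P →* U ≀ᵣ G} {η : P →* V ≀ᵣ G}

theorem nonempty_mulEquiv_of_isUniversalLiftFor
    (hθ : IsNormalizedLift π β θ) (hη : IsNormalizedLift π β η)
    (hUU : IsUniversalLiftFor π β θ U) (hUV : IsUniversalLiftFor π β θ V)
    (hVU : IsUniversalLiftFor π β η U) (hVV : IsUniversalLiftFor π β η V) :
    Nonempty (U ≃* V) := by
  obtain ⟨f, hf, -⟩ := hUV η hη
  obtain ⟨f', hf', -⟩ := hVU θ hθ
  refine ⟨MonoidHom.toMulEquiv f f' ?_ ?_⟩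
  · refine (hUU θ hθ).unique ?_ ?_
    · rw [wreathMap_comp, MonoidHom.comp_assoc, hf, hf']
    · rw [wreathMap_id, MonoidHom.id_comp]
  · refine (hVV η hη).unique ?_ ?_
    · rw [wreathMap_comp, MonoidHom.comp_assoc, hf', hf]
    · rw [wreathMap_id, MonoidHom.id_comp]

end Universal

section KernelLift

variable {B P G X Y : Type*} [Group B] [Group P] [Group G] [Group X] [Group Y]
  {π : P →* G} {β : B →* P}

/-- A set-theoretic section of `π`, pointed and equivariant under left translation by `B`. -/
structure EquivariantSection (π : P →* G) (β : B →* P) where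
  toFun : G → P
  map_toFun (g : G) : π (toFun g) = g
  toFun_one : toFun 1 = 1
  toFun_base_mul (b : B) (g : G) : toFun (π (β b) * g) = β b * toFun g

theorem nonempty_equivariantSection (hπ : Surjective π) (hβ : Injective (π.comp β)) :
    Nonempty (EquivariantSection π β) := by
  obtain ⟨α, hα, -⟩ := exists_orbitCoordinate hβ
  obtain ⟨t, ht⟩ := hπ.hasRightInverse
  let s (g : G) : P := β (α g) * t ((π (β (α g)))⁻¹ * g)
  have hs (g : G) : π (s g) = g := by simp [s, ht _]
  have hmul (b : B) (g : G) : s (π (β b) * g) = β b * s g := by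
    have h : α (π (β b) * g) = b * α g := hα b g
    simp [s, h, mul_assoc]
  exact ⟨⟨fun g => s g * (s 1)⁻¹, by simp [hs], by simp, by simp [hmul, mul_assoc]⟩⟩

namespace EquivariantSection

variable (s : EquivariantSection π β)

/-- The Kaloujnine–Krasner embedding determined by the section `s`. -/
def kaloujnineKrasner : P →* π.ker ≀ᵣ G where
  toFun p := ⟨fun g => ⟨(s.toFun g)⁻¹ * p * s.toFun ((π p)⁻¹ * g), by
    simp [MonoidHom.mem_ker, s.map_toFun]⟩, π p⟩
  map_one' := by ext <;> simp
  map_mul' p p' := by ext <;> simp [mul_assoc]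

lemma kaloujnineKrasner_base (b : B) : s.kaloujnineKrasner (β b) = inl (π (β b)) := by
  ext g
  · have h := s.toFun_base_mul b ((π (β b))⁻¹ * g)
    rw [mul_inv_cancel_left] at h
    simp [kaloujnineKrasner, h, mul_assoc]
  · rfl

/-- The lift of `π` with holonomy `k` on the kernel and gauge `x`. -/
def kernelLift (k : π.ker →* X) (x : G ⧸ (π.comp β).range → X) : P →* X ≀ᵣ G :=
  (gaugeChange x).comp ((wreathMap k).comp s.kaloujnineKrasner)

lemma kernelLift_left (k : π.ker →* X) (x : G ⧸ (π.comp β).range → X) (p : P) (g : G) :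
    (s.kernelLift k x p).left g =
      x (g⁻¹ : G) * k ((s.kaloujnineKrasner p).left g) * (x (((π p)⁻¹ * g)⁻¹ : G))⁻¹ :=
  gaugeChange_left x _ g

lemma isNormalizedLift_kernelLift (k : π.ker →* X) (x : G ⧸ (π.comp β).range → X) :
    IsNormalizedLift π β (s.kernelLift k x) where
  right_apply p := gaugeChange_right x _
  apply_base b := by
    rw [kernelLift, MonoidHom.comp_apply, MonoidHom.comp_apply, kaloujnineKrasner_base,
      wreathMap_inl]
    exact gaugeChange_inl_of_mem x ⟨b, rfl⟩

lemma wreathMap_comp_kernelLift (f : X →* Y) (k : π.ker →* X)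
    (x : G ⧸ (π.comp β).range → X) :
    (wreathMap f).comp (s.kernelLift k x) = s.kernelLift (f.comp k) (f ∘ x) :=
  MonoidHom.ext fun _ => wreathMap_gaugeChange x f _

lemma kernelLift_left_section {k : π.ker →* X} {x : G ⧸ (π.comp β).range → X}
    (hx : x (1 : G) = 1) (g : G) : (s.kernelLift k x (s.toFun g)).left g = x (g⁻¹ : G) := by
  have h : (s.kaloujnineKrasner (s.toFun g)).left g = 1 := by
    ext
    simp [kaloujnineKrasner, s.map_toFun, s.toFun_one]
  simp [kernelLift_left, h, s.map_toFun, hx]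

lemma kernelLift_left_ker {k : π.ker →* X} {x : G ⧸ (π.comp β).range → X}
    (hx : x (1 : G) = 1) (l : π.ker) : (s.kernelLift k x l).left 1 = k l := by
  have hl : π l = 1 := l.2
  have h : (s.kaloujnineKrasner (l : P)).left 1 = l := by
    ext
    simp [kaloujnineKrasner, hl, s.toFun_one]
  simp [kernelLift_left, h, hl, hx]

theorem kernelLift_inj {k k' : π.ker →* X} {x x' : G ⧸ (π.comp β).range → X}
    (hx : x (1 : G) = 1) (hx' : x' (1 : G) = 1)
    (h : s.kernelLift k x = s.kernelLift k' x') : k = k' ∧ x = x' := by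
  constructor
  · ext l
    rw [← s.kernelLift_left_ker hx, h, s.kernelLift_left_ker hx']
  · funext q
    obtain ⟨g, rfl⟩ := QuotientGroup.mk_surjective q
    rw [← inv_inv g, ← s.kernelLift_left_section hx, h, s.kernelLift_left_section hx']

end EquivariantSection

/-- The holonomy at the identity of a lift `θ` of `π`. -/
def IsNormalizedLift.holonomy {θ : P →* X ≀ᵣ G} (hθ : IsNormalizedLift π β θ) : π.ker →* X where
  toFun l := (θ l).left 1
  map_one' := by simp
  map_mul' l l' := by
    have hl : π l = 1 := l.2
    simp [hθ.right_apply, hl]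

theorem IsNormalizedLift.exists_eq_kernelLift (s : EquivariantSection π β) {θ : P →* X ≀ᵣ G}
    (hθ : IsNormalizedLift π β θ) :
    ∃ (k : π.ker →* X) (x : G ⧸ (π.comp β).range → X),
      x (1 : G) = 1 ∧ s.kernelLift k x = θ := by
  obtain ⟨x, hx⟩ : ∃ x : G ⧸ (π.comp β).range → X,
      ∀ g : G, x (g⁻¹ : G) = (θ (s.toFun g)).left g := by
    refine exists_cosetFunction_of_mul_invariant ?_
    rintro _ ⟨b, rfl⟩ g
    simp [s.toFun_base_mul, hθ.apply_base]
  refine ⟨hθ.holonomy, x, ?_, ?_⟩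
  · simpa [s.toFun_one] using hx 1
  ext p g
  · have hfactor : p * s.toFun ((π p)⁻¹ * g) =
        s.toFun g * ((s.kaloujnineKrasner p).left g : P) := by
      simp [EquivariantSection.kaloujnineKrasner, mul_assoc]
    have h := congrArg (fun p => (θ p).left g) hfactor
    simp only [map_mul, mul_left, Pi.mul_apply, hθ.right_apply, s.map_toFun, inv_mul_cancel] at h
    rw [s.kernelLift_left, hx, hx, mul_inv_eq_iff_eq_mul]
    exact h.symm
  · rw [hθ.right_apply, (s.isNormalizedLift_kernelLift _ _).right_apply]

end KernelLift

section PartialGenerators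

variable {Q X : Type*} [Group X] {S : Set Q}

open Classical in
/-- The free generator `q` when `q ∈ S`, and `1` otherwise: the universal function from `Q` to a
group that is trivial off `S`. -/
noncomputable def freeGenOrOne (S : Set Q) (q : Q) : FreeGroup S :=
  if h : q ∈ S then FreeGroup.of ⟨q, h⟩ else 1

lemma freeGenOrOne_coe (q : S) : freeGenOrOne S q = FreeGroup.of q := dif_pos q.2

lemma freeGenOrOne_of_notMem {q : Q} (h : q ∉ S) : freeGenOrOne S q = 1 := dif_neg h

lemma lift_freeGenOrOne {x : Q → X} (hx : ∀ q ∉ S, x q = 1) (q : Q) :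
    FreeGroup.lift (fun q : S => x q) (freeGenOrOne S q) = x q := by
  by_cases h : q ∈ S
  · simpa using congrArg (FreeGroup.lift fun q : S => x q) (freeGenOrOne_coe ⟨q, h⟩)
  · simp [freeGenOrOne_of_notMem h, hx q h]

lemma hom_ext_freeGenOrOne {f f' : FreeGroup S →* X}
    (h : ∀ q, f (freeGenOrOne S q) = f' (freeGenOrOne S q)) : f = f' := by
  ext q
  simpa only [freeGenOrOne_coe] using h q

end PartialGenerators

section VertexLift

variable {B P G X : Type*} [Group B] [Group P] [Group G] [Group X] {π : P →* G} {β : B →* P}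

/-- The lift of `π` whose holonomy and gauge are generic: the former is the identity of the kernel,
the latter sends each nontrivial coset to its own free generator. -/
noncomputable def vertexLift (s : EquivariantSection π β) :
    P →* Coprod π.ker (FreeGroup ({((1 : G) : G ⧸ (π.comp β).range)}ᶜ : Set _)) ≀ᵣ G :=
  s.kernelLift Coprod.inl (fun q => Coprod.inr (freeGenOrOne _ q))

theorem isUniversalLiftFor_vertexLift (s : EquivariantSection π β) :
    IsUniversalLiftFor π β (vertexLift s) X := by
  intro θ hθ
  obtain ⟨k, x, hx, rfl⟩ := hθ.exists_eq_kernelLift s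
  have hx_off : ∀ q ∉ ({((1 : G) : G ⧸ (π.comp β).range)}ᶜ : Set _), x q = 1 := by
    simpa using hx
  refine ⟨Coprod.lift k (FreeGroup.lift fun q => x q), ?_, fun f hf => ?_⟩
  · simp only [vertexLift, s.wreathMap_comp_kernelLift, Coprod.lift_comp_inl]
    congr 1
    funext q
    exact lift_freeGenOrOne hx_off q
  · have hgen : f (Coprod.inr (freeGenOrOne _ ((1 : G) : G ⧸ (π.comp β).range))) = 1 := by
      simp [freeGenOrOne_of_notMem]
    simp only [vertexLift, s.wreathMap_comp_kernelLift] at hf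
    obtain ⟨hk, hx'⟩ := s.kernelLift_inj hgen hx hf
    refine Coprod.hom_ext hk (hom_ext_freeGenOrOne fun q => ?_)
    exact (congrFun hx' q).trans (lift_freeGenOrOne hx_off q).symm

end VertexLift

section ChosenCosets

variable {G : Type*} [Group G]

/-- The cosets of `H` that represent the cosets of a larger subgroup `M`: each coset of `M` is
represented by that of its element `Quotient.out`. -/
def chosenCosets (H M : Subgroup G) : Set (G ⧸ H) := Set.range fun c : G ⧸ M => (c.out : G ⧸ H)

lemma card_chosenCosets {H M : Subgroup G} (hHM : H ≤ M) :
    Nat.card (chosenCosets H M) = M.index :=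
  Nat.card_range_of_injective <| LeftInverse.injective (g := Subgroup.quotientMapOfLE hHM)
    QuotientGroup.out_eq'

lemma card_compl_chosenCosets {H M : Subgroup G} [H.FiniteIndex] (hHM : H ≤ M) :
    (Nat.card ↥(chosenCosets H M)ᶜ : ℤ) = H.index - M.index := by
  have h := Set.ncard_add_ncard_compl (chosenCosets H M)
  rw [Set.ncard_def, Set.ncard_def] at h
  rw [eq_sub_iff_add_eq', ← card_chosenCosets hHM]
  exact_mod_cast h

end ChosenCosets

section EdgeLift

variable {ι B G X Y : Type*} {A : ι → Type*} [∀ i, Group (A i)] [Group B] [Group G] [Group X]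
  [Group Y] {φ : ∀ i, B →* A i} (π : PushoutI φ →* G)

/-- The image of the base group. -/
abbrev baseRange : Subgroup G := (π.comp (PushoutI.base φ)).range

/-- The image of the `i`-th factor. -/
abbrev factorRange (i : ι) : Subgroup G := (π.comp (PushoutI.of i)).range

/-- The lift that on each factor `A i` differs from the standard splitting by the gauge `y i`. -/
def gaugeLift (y : ι → G ⧸ baseRange π → X) : PushoutI φ →* X ≀ᵣ G :=
  PushoutI.lift (fun i => (gaugeChange (y i)).comp (inl.comp (π.comp (PushoutI.of i))))
    (inl.comp (π.comp (PushoutI.base φ))) fun i => by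
      ext1 b
      simp only [MonoidHom.comp_apply, PushoutI.of_apply_eq_base]
      exact gaugeChange_inl_of_mem _ ⟨b, rfl⟩

variable {π}

lemma gaugeLift_of (y : ι → G ⧸ baseRange π → X) (i : ι) (a : A i) :
    gaugeLift π y (PushoutI.of i a) = gaugeChange (y i) (inl (π (PushoutI.of i a))) :=
  PushoutI.lift_of _ _ _ a

lemma gaugeLift_base (y : ι → G ⧸ baseRange π → X) (b : B) :
    gaugeLift π y (PushoutI.base φ b) = inl (π (PushoutI.base φ b)) :=
  PushoutI.lift_base _ _ _ b

lemma isNormalizedLift_gaugeLift (y : ι → G ⧸ baseRange π → X) :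
    IsNormalizedLift π (PushoutI.base φ) (gaugeLift π y) where
  right_apply p := by
    have h : rightHom.comp (gaugeLift π y) = π := by
      ext <;> simp [gaugeLift_of, gaugeLift_base]
    exact DFunLike.congr_fun h p
  apply_base := gaugeLift_base y

lemma wreathMap_comp_gaugeLift (f : X →* Y) (y : ι → G ⧸ baseRange π → X) :
    (wreathMap f).comp (gaugeLift π y) = gaugeLift π fun i => f ∘ y i := by
  refine PushoutI.hom_ext (fun i => ?_) ?_
  · ext1 a
    simp only [MonoidHom.comp_apply, gaugeLift_of, wreathMap_gaugeChange, wreathMap_inl]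
  · ext1 b
    simp only [MonoidHom.comp_apply, gaugeLift_base, wreathMap_inl]

variable (π) in
/-- The pairs `(i, q)` of a factor and a coset of `baseRange π` that is not the chosen one inside
its coset of `factorRange π i`. -/
def unchosenPairs : Set (ι × G ⧸ baseRange π) :=
  {e | e.2 ∉ chosenCosets (baseRange π) (factorRange π e.1)}

theorem gaugeLift_inj (hπ : ∀ i, Injective (π.comp (PushoutI.of i)))
    {y y' : ι → G ⧸ baseRange π → X} (hy : ∀ e ∉ unchosenPairs π, y e.1 e.2 = 1)
    (hy' : ∀ e ∉ unchosenPairs π, y' e.1 e.2 = 1) (h : gaugeLift π y = gaugeLift π y') :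
    y = y' := by
  funext i q
  obtain ⟨g, rfl⟩ := QuotientGroup.mk_surjective q
  obtain ⟨α, -, hα⟩ := exists_orbitCoordinate (hπ i)
  have hval {z : ι → G ⧸ baseRange π → X} (hz : ∀ e ∉ unchosenPairs π, z e.1 e.2 = 1) :
      (gaugeLift π z (PushoutI.of i (α g⁻¹))).left g⁻¹ = z i g := by
    have hchosen := hz (i, (((g : G ⧸ factorRange π i).out : G) : G ⧸ baseRange π))
      (not_not.2 ⟨_, rfl⟩)
    have hout := hα g⁻¹
    simp only [inv_inv] at hout
    simp only [hout, MonoidHom.comp_apply] at hchosen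
    simp [gaugeLift_of, gaugeChange_left, hchosen]
  rw [← hval hy, h, hval hy']

theorem IsNormalizedLift.exists_eq_gaugeLift (hπ : ∀ i, Injective (π.comp (PushoutI.of i)))
    {θ : PushoutI φ →* X ≀ᵣ G} (hθ : IsNormalizedLift π (PushoutI.base φ) θ) :
    ∃ y : ι → G ⧸ baseRange π → X,
      (∀ e ∉ unchosenPairs π, y e.1 e.2 = 1) ∧ gaugeLift π y = θ := by
  have hfactor (i : ι) : ∃ y : G ⧸ baseRange π → X,
      (∀ c : G ⧸ factorRange π i, y c.out = 1) ∧
      ∀ a, θ (PushoutI.of i a) = gaugeChange y (inl (π (PushoutI.of i a))) := by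
    obtain ⟨u, hu, hu_out⟩ := exists_left_eq_mul_inv (hπ i) (θ.comp (PushoutI.of i))
      fun a => hθ.right_apply _
    have hinv : ∀ h ∈ baseRange π, ∀ g, u (h * g) = u g := by
      rintro _ ⟨b, rfl⟩ g
      have h := hu (φ i b) (π (PushoutI.base φ b) * g)
      exact mul_inv_eq_one.1 (by simpa [PushoutI.of_apply_eq_base, hθ.apply_base] using h.symm)
    obtain ⟨y, hy⟩ := exists_cosetFunction_of_mul_invariant hinv
    refine ⟨y, fun c => ?_, fun a => ?_⟩
    · rw [← hu_out c, ← hy, inv_inv]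
    · ext g
      · have h := hu a g
        simpa [gaugeChange_left, ← hy] using h
      · simp [hθ.right_apply]
  choose y hy hθy using hfactor
  refine ⟨y, fun e he => ?_, PushoutI.hom_ext (fun i => ?_) ?_⟩
  · obtain ⟨c, hc⟩ := not_not.1 he
    rw [← hc, hy]
  · ext1 a
    exact (gaugeLift_of y i a).trans (hθy i a).symm
  · ext1 b
    exact (gaugeLift_base y b).trans (hθ.apply_base b).symm

variable (π) in
/-- The lift whose gauges are generic. -/
noncomputable def edgeLift : PushoutI φ →* FreeGroup (unchosenPairs π) ≀ᵣ G :=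
  gaugeLift π fun i q => freeGenOrOne (unchosenPairs π) (i, q)

theorem isUniversalLiftFor_edgeLift (hπ : ∀ i, Injective (π.comp (PushoutI.of i))) :
    IsUniversalLiftFor π (PushoutI.base φ) (edgeLift π) X := by
  intro θ hθ
  obtain ⟨y, hy, rfl⟩ := hθ.exists_eq_gaugeLift hπ
  refine ⟨FreeGroup.lift fun e => y e.1.1 e.1.2, ?_, fun f hf => ?_⟩
  · simp only [edgeLift, wreathMap_comp_gaugeLift]
    congr 1
    funext i q
    exact lift_freeGenOrOne (x := fun e => y e.1 e.2) hy (i, q)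
  · simp only [edgeLift, wreathMap_comp_gaugeLift] at hf
    have hfy := gaugeLift_inj hπ (fun e he => by simp [freeGenOrOne_of_notMem he]) hy hf
    refine hom_ext_freeGenOrOne fun e => ?_
    exact (congrFun₂ hfy e.1 e.2).trans (lift_freeGenOrOne hy e).symm

lemma baseRange_le_factorRange (i : ι) : baseRange π ≤ factorRange π i := by
  rintro _ ⟨b, rfl⟩
  exact ⟨φ i b, congrArg π (PushoutI.of_apply_eq_base φ i b)⟩

theorem card_unchosenPairs [Fintype ι] [(baseRange π).FiniteIndex] :
    (Nat.card (unchosenPairs π) : ℤ) =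
      ∑ i, (((baseRange π).index : ℤ) - ((factorRange π i).index : ℤ)) := by
  have e : unchosenPairs π ≃ Σ i, ↥(chosenCosets (baseRange π) (factorRange π i))ᶜ :=
    Equiv.setProdEquivSigma _
  rw [Nat.card_congr e, Nat.card_sigma, Nat.cast_sum]
  exact Finset.sum_congr rfl fun i _ => card_compl_chosenCosets (baseRange_le_factorRange i)

end EdgeLift

theorem nonempty_freeGroup_mulEquiv_ker_coprod {ι B G : Type*} {A : ι → Type*} [∀ i, Group (A i)]
    [Group B] [Group G] {φ : ∀ i, B →* A i} {π : PushoutI φ →* G} (hπ : Surjective π)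
    (hbase : Injective (π.comp (PushoutI.base φ)))
    (hof : ∀ i, Injective (π.comp (PushoutI.of i))) :
    Nonempty (FreeGroup (unchosenPairs π) ≃*
      Coprod π.ker (FreeGroup ({((1 : G) : G ⧸ baseRange π)}ᶜ : Set _))) := by
  obtain ⟨s⟩ := nonempty_equivariantSection hπ hbase
  exact nonempty_mulEquiv_of_isUniversalLiftFor
    (isNormalizedLift_gaugeLift _) (s.isNormalizedLift_kernelLift _ _)
    (isUniversalLiftFor_edgeLift hof) (isUniversalLiftFor_edgeLift hof)
    (isUniversalLiftFor_vertexLift s) (isUniversalLiftFor_vertexLift s)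

section FreeProducts

/-- The free product of two free groups is free on the disjoint union of the generators. -/
def coprodFreeGroupMulEquiv (S T : Type*) :
    Coprod (FreeGroup S) (FreeGroup T) ≃* FreeGroup (S ⊕ T) :=
  MonoidHom.toMulEquiv
    (Coprod.lift (FreeGroup.map Sum.inl) (FreeGroup.map Sum.inr))
    (FreeGroup.lift (Sum.elim (Coprod.inl ∘ FreeGroup.of) (Coprod.inr ∘ FreeGroup.of)))
    (by apply Coprod.hom_ext <;> ext <;> simp)
    (by ext (s | t) <;> simp)

theorem exists_mulEquiv_freeGroup_of_coprod {E T K : Type*} [Group K] [Finite E]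
    (e : FreeGroup E ≃* Coprod K (FreeGroup T)) :
    ∃ n : ℕ, n + Nat.card T = Nat.card E ∧ Nonempty (K ≃* FreeGroup (Fin n)) := by
  have hinj : Injective (e.symm.toMonoidHom.comp Coprod.inl) :=
    e.symm.injective.comp Coprod.inl_injective
  -- The Nielsen–Schreier theorem enters here, as the instance for subgroups of free groups.
  have : IsFreeGroup K := IsFreeGroup.ofMulEquiv (MonoidHom.ofInjective hinj).symm
  let basis := IsFreeGroup.toFreeGroup K
  let generators : E ≃ IsFreeGroup.Generators K ⊕ T := Equiv.ofFreeGroupEquiv <|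
    (e.trans (MulEquiv.coprodCongr basis (MulEquiv.refl _))).trans (coprodFreeGroupMulEquiv _ _)
  have : Finite (IsFreeGroup.Generators K ⊕ T) := Finite.of_equiv _ generators
  have : Finite (IsFreeGroup.Generators K) := Finite.sum_left T
  have : Finite T := Finite.sum_right (IsFreeGroup.Generators K)
  refine ⟨Nat.card (IsFreeGroup.Generators K), ?_,
    ⟨basis.trans (FreeGroup.freeGroupCongr (Finite.equivFin _))⟩⟩
  rw [Nat.card_congr generators, Nat.card_sum]

end FreeProducts

theorem exists_ker_mulEquiv_freeGroup {ι B G : Type*} [Fintype ι] {A : ι → Type*}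
    [∀ i, Group (A i)] [Group B] [Group G] {φ : ∀ i, B →* A i} {π : PushoutI φ →* G}
    [(baseRange π).FiniteIndex] (hπ : Surjective π)
    (hbase : Injective (π.comp (PushoutI.base φ)))
    (hof : ∀ i, Injective (π.comp (PushoutI.of i))) :
    ∃ n : ℕ, (n : ℤ) = 1 - ((baseRange π).index : ℤ) +
        ∑ i, (((baseRange π).index : ℤ) - ((factorRange π i).index : ℤ)) ∧
      Nonempty (π.ker ≃* FreeGroup (Fin n)) := by
  obtain ⟨e⟩ := nonempty_freeGroup_mulEquiv_ker_coprod hπ hbase hof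
  obtain ⟨n, hn, hfree⟩ := exists_mulEquiv_freeGroup_of_coprod e
  refine ⟨n, ?_, hfree⟩
  have hvertices := Set.ncard_add_ncard_compl {((1 : G) : G ⧸ baseRange π)}
  rw [Set.ncard_singleton, Set.ncard_def] at hvertices
  have hrank : (n : ℤ) + Nat.card ↥({((1 : G) : G ⧸ baseRange π)}ᶜ : Set _) =
      Nat.card (unchosenPairs π) := by exact_mod_cast hn
  have hindex : (1 : ℤ) + Nat.card ↥({((1 : G) : G ⧸ baseRange π)}ᶜ : Set _) =
      (baseRange π).index := by exact_mod_cast hvertices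
  rw [card_unchosenPairs] at hrank
  linarith

section PushoutLift

variable {ι B G : Type*} {A : ι → Type*} [∀ i, Group (A i)] [Group B] [Group G]
  {φ : ∀ i, B →* A i} (f : ∀ i, A i →* G) (f₀ : B →* G) (hf : ∀ i, (f i).comp (φ i) = f₀)

lemma lift_comp_of (i : ι) :
    (PushoutI.lift f f₀ hf : PushoutI φ →* G).comp (PushoutI.of i) = f i :=
  MonoidHom.ext (PushoutI.lift_of f f₀ hf)

lemma lift_comp_base :
    (PushoutI.lift f f₀ hf : PushoutI φ →* G).comp (PushoutI.base φ) = f₀ :=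
  MonoidHom.ext (PushoutI.lift_base f f₀ hf)

end PushoutLift

theorem tc_kernel_of_amalgamated_product_is_free_general {ι G : Type*} [Fintype ι] [Group G]
    {H : Subgroup G} [H.FiniteIndex] {M : ι → Subgroup G} (hHM : ∀ i, H ≤ M i)
    (hM : ⨆ i, M i = ⊤) :
    ∃ n : ℕ, (n : ℤ) = 1 - (H.index : ℤ) + ∑ i, ((H.index : ℤ) - ((M i).index : ℤ)) ∧
      Nonempty
        ((PushoutI.lift (fun i => (M i).subtype) H.subtype (fun _ => rfl) :
          PushoutI (fun i => Subgroup.inclusion (hHM i)) →* G).ker ≃* FreeGroup (Fin n)) := by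
  set π : PushoutI (fun i => Subgroup.inclusion (hHM i)) →* G :=
    PushoutI.lift (fun i => (M i).subtype) H.subtype (fun _ => rfl)
  have hof (i : ι) : π.comp (PushoutI.of i) = (M i).subtype := lift_comp_of _ _ _ i
  have hbase : π.comp (PushoutI.base _) = H.subtype := lift_comp_base _ _ _
  have hfactorRange (i : ι) : factorRange π i = M i := by
    rw [factorRange, hof, Subgroup.range_subtype]
  have hbaseRange : baseRange π = H := by rw [baseRange, hbase, Subgroup.range_subtype]
  have hsurj : Surjective π := by
    rw [← MonoidHom.range_eq_top, eq_top_iff, ← hM, iSup_le_iff]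
    intro i m hm
    exact ⟨PushoutI.of i ⟨m, hm⟩, DFunLike.congr_fun (hof i) ⟨m, hm⟩⟩
  have : (baseRange π).FiniteIndex := by rwa [hbaseRange]
  simpa only [hbaseRange, hfactorRange] using exists_ker_mulEquiv_freeGroup hsurj
    (hbase ▸ H.subtype_injective) (fun i => hof i ▸ (M i).subtype_injective)

lemma exists_mem_maximal_commutative {G : Type*} [Group G] [Finite G] (g : G) :
    ∃ N : Subgroup G, g ∈ N ∧
      Maximal (fun N : Subgroup G => ∀ x ∈ N, ∀ y ∈ N, x * y = y * x) N := by
  have hcomm : ∀ x ∈ Subgroup.zpowers g, ∀ y ∈ Subgroup.zpowers g, x * y = y * x := by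
    rintro _ ⟨a, rfl⟩ _ ⟨b, rfl⟩
    exact zpow_mul_comm g a b
  obtain ⟨N, hN, hmax⟩ := Finite.exists_le_maximal
    (p := fun N : Subgroup G => ∀ x ∈ N, ∀ y ∈ N, x * y = y * x) hcomm
  exact ⟨N, hN (Subgroup.mem_zpowers g), hmax⟩

/-- For a finite nonabelian transitively commutative group `G` with center `Z`
and maximal abelian subgroups `M 1, …, M k`, the kernel of the canonical map
from the amalgamated free product of the `M i` along `Z` to `G` is a free group
of rank `N_G = 1 - [G : Z] + ∑ ([G : Z] - [G : M i])`. -/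
theorem tc_kernel_of_amalgamated_product_is_free
    (G : Type*) [Group G] [Finite G]
    (hnonab : ¬ ∀ a b : G, a * b = b * a)
    (hTC : ∀ g : G, g ∉ Subgroup.center G →
      ∀ x ∈ Subgroup.centralizer {g}, ∀ y ∈ Subgroup.centralizer {g}, x * y = y * x)
    (k : ℕ) (M : Fin k → Subgroup G)
    (hinj : Function.Injective M)
    (hmax : ∀ i, (∀ x ∈ M i, ∀ y ∈ M i, x * y = y * x) ∧
      ∀ N : Subgroup G, (∀ x ∈ N, ∀ y ∈ N, x * y = y * x) → M i ≤ N → M i = N)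
    (hall : ∀ N : Subgroup G,
      ((∀ x ∈ N, ∀ y ∈ N, x * y = y * x) ∧
        ∀ N' : Subgroup G, (∀ x ∈ N', ∀ y ∈ N', x * y = y * x) → N ≤ N' → N = N') →
      ∃ i, N = M i)
    (hZle : ∀ i, Subgroup.center G ≤ M i) :
    ∃ N_G : ℕ,
      (N_G : ℤ) = 1 - ((Subgroup.center G).index : ℤ) +
        ∑ i : Fin k, (((Subgroup.center G).index : ℤ) - ((M i).index : ℤ)) ∧
      Nonempty
        ((MonoidHom.ker
          (Monoid.PushoutI.lift (fun i => (M i).subtype)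
            ((Subgroup.center G).subtype)
            (fun i => by ext x; rfl) :
            Monoid.PushoutI (fun i => Subgroup.inclusion (hZle i)) →* G)) ≃*
          FreeGroup (Fin N_G)) := by
  refine tc_kernel_of_amalgamated_product_is_free_general hZle (eq_top_iff.2 fun g _ => ?_)
  obtain ⟨N, hgN, hN⟩ := exists_mem_maximal_commutative g
  obtain ⟨i, rfl⟩ := hall N ⟨hN.1, fun N' hN' hle => hN.eq_of_le hN' hle⟩
  exact Subgroup.mem_iSup_of_mem i hgN
end

section
/- Let P be the amalgamated free product of three copies of ℤ/4 along ℤ/2, where in each copy ℤ/2 is embedded as the unique subgroup of order 2 (i.e., P is the pushout in the category of groups of the three inclusions ℤ/2 ↪ ℤ/4). Then for every i > 0, the group homology H_i(P; ℤ) with trivial integer coefficients is isomorphic to ℤ/4 ⊕ ℤ/2 ⊕ ℤ/2 when i is odd, and is zero when i is even. In particular, the abelianization of P is isomorphic to ℤ/4 ⊕ ℤ/2 ⊕ ℤ/2. -/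
/-- The differential `d : Cₙ₊₁ → Cₙ` of the inhomogeneous bar complex computing
the group homology of `P` with trivial `ℤ` coefficients, where
`Cₙ = (Fin n → P) →₀ ℤ` is the free abelian group on `n`-tuples:
`d(g₁,…,gₙ₊₁) = (g₂,…,gₙ₊₁) + ∑ⱼ (-1)ʲ (g₁,…,gⱼgⱼ₊₁,…,gₙ₊₁)
  + (-1)ⁿ⁺¹ (g₁,…,gₙ)`. -/
noncomputable def barDiff (P : Type*) [Group P] (n : ℕ) :
    ((Fin (n + 1) → P) →₀ ℤ) →ₗ[ℤ] ((Fin n → P) →₀ ℤ) :=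
  Finsupp.lift ((Fin n → P) →₀ ℤ) ℤ (Fin (n + 1) → P) fun g =>
    Finsupp.single (fun i => g i.succ) 1
    + ∑ j : Fin n, ((-1 : ℤ) ^ ((j : ℕ) + 1)) •
        Finsupp.single (fun i : Fin n =>
          if (i : ℕ) < (j : ℕ) then g i.castSucc
          else if (i : ℕ) = (j : ℕ) then g i.castSucc * g i.succ
          else g i.succ) 1
    + ((-1 : ℤ) ^ (n + 1)) • Finsupp.single (fun i : Fin n => g i.castSucc) 1

/-- The group homology `H_{k+1}(P; ℤ)` with trivial integer coefficients,
defined as the `(k+1)`-st homology of the inhomogeneous bar complex: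
cycles in degree `k + 1` modulo (the intersection with) boundaries. -/
noncomputable def barHomologySucc (P : Type*) [Group P] (k : ℕ) : Type _ :=
  ↥(LinearMap.ker (barDiff P k)) ⧸
    Submodule.comap (LinearMap.ker (barDiff P k)).subtype
      (LinearMap.range (barDiff P (k + 1)))

noncomputable instance (P : Type*) [Group P] (k : ℕ) :
    AddCommGroup (barHomologySucc P k) := by
  unfold barHomologySucc; infer_instance

/-- The unique embedding `ℤ/2 ↪ ℤ/4`, sending `1` to `2`. -/
noncomputable def zmodTwoToFour : ZMod 2 →+ ZMod 4 :=
  ZMod.lift 2 ⟨zmultiplesHom (ZMod 4) 2, by decide⟩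

/-- The amalgamated free product `P = ℤ/4 *_{ℤ/2} ℤ/4 *_{ℤ/2} ℤ/4` of three
copies of `ℤ/4` along `ℤ/2`, each embedded as the unique subgroup of order
two; this is `π₁(B(2,Q₈))` for the quaternion group `Q₈`. -/
noncomputable def amalgamThreeZFourAlongZTwo : Type :=
  Monoid.PushoutI
    (fun _ : Fin 3 => AddMonoidHom.toMultiplicative zmodTwoToFour)

noncomputable instance : Group amalgamThreeZFourAlongZTwo := by
  unfold amalgamThreeZFourAlongZTwo; infer_instance

/-!
Write `s` and `t i` for generators of order `a * m` of cyclic groups amalgamated along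
`s ^ a = t i ^ a`. Crossed homomorphisms extend freely from generators that respect the relators
`s ^ (a * m)` and `s ^ a * t i ^ (-a)`, so the Fox derivatives of these relators generate the
relations among the elements `s - 1`, `t i - 1` of the augmentation ideal. Right annihilation by
`t - 1` or by a cyclic sum is principal for `t` of finite order, and `s ^ a` is central, so the
syzygies can be written down explicitly and the relations among them are again given by the Fox
matrix: the resulting free resolution of the trivial module is periodic. After augmentation its
differentials alternate between zero and an injective triangular matrix with cokernel
`ℤ/(a * m) ⊕ (ℤ/a)^κ`.
-/

open MonoidAlgebra
open scoped Matrix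

section GroupRing

variable (k : Type*) {G : Type*} [CommRing k] [Group G]

/-- The augmentation `g ↦ 1` of the group algebra. -/
noncomputable def augmentation : k[G] →ₐ[k] k :=
  MonoidAlgebra.lift k k G 1

@[simp]
theorem augmentation_of (g : G) : augmentation k (of k G g) = 1 := by
  simp [augmentation]

variable {k}

theorem of_sub_one_mem_of_closure_eq_top {S : Set G} (hS : Subgroup.closure S = ⊤)
    {I : Ideal k[G]} (hI : ∀ s ∈ S, of k G s - 1 ∈ I) (g : G) : of k G g - 1 ∈ I := by
  induction hS ▸ Subgroup.mem_top g using Subgroup.closure_induction with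
  | mem s hs => exact hI s hs
  | one => rw [map_one, sub_self]; exact I.zero_mem
  | mul g h _ _ hg hh =>
    rw [map_mul, show of k G g * of k G h - 1 = of k G g * (of k G h - 1) + (of k G g - 1) by
      noncomm_ring]
    exact I.add_mem (I.mul_mem_left _ hh) hg
  | inv g _ hg =>
    have hinv : of k G g⁻¹ * of k G g = 1 := by rw [← map_mul, inv_mul_cancel, map_one]
    rw [show of k G g⁻¹ - 1 = -of k G g⁻¹ * (of k G g - 1) by
      rw [neg_mul, mul_sub, hinv, mul_one, neg_sub]]
    exact I.mul_mem_left _ hg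

theorem ker_augmentation_le_of_closure_eq_top {S : Set G} (hS : Subgroup.closure S = ⊤)
    {I : Ideal k[G]} (hI : ∀ s ∈ S, of k G s - 1 ∈ I) :
    RingHom.ker (augmentation k (G := G)) ≤ I := by
  have hsub (x : k[G]) : x - algebraMap k k[G] (augmentation k x) ∈ I := by
    induction x using MonoidAlgebra.induction_on with
    | of g =>
      rw [augmentation_of, map_one]
      exact of_sub_one_mem_of_closure_eq_top hS hI g
    | add x y hx hy => simpa [add_sub_add_comm] using I.add_mem hx hy
    | smul c x hx =>
      rw [map_smul, smul_eq_mul, map_mul, ← Algebra.smul_def, ← smul_sub]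
      exact Submodule.smul_of_tower_mem I c hx
  intro x hx
  simpa [RingHom.mem_ker.mp hx] using hsub x

end GroupRing

section CyclicSum

variable (k : Type*) {G : Type*} [CommRing k] [Group G]

/-- The sum `1 + t + ⋯ + t ^ (n - 1)` in the group algebra, which is the Fox derivative of
`t ^ n` with respect to `t`. -/
noncomputable def cyclicSum (t : G) (n : ℕ) : k[G] :=
  ∑ i ∈ Finset.range n, of k G (t ^ i)

theorem cyclicSum_mul_of_sub_one (t : G) (n : ℕ) :
    cyclicSum k t n * (of k G t - 1) = of k G (t ^ n) - 1 := by
  simp only [cyclicSum, map_pow, geom_sum_mul]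

theorem of_sub_one_mul_cyclicSum (t : G) (n : ℕ) :
    (of k G t - 1) * cyclicSum k t n = of k G (t ^ n) - 1 := by
  simp only [cyclicSum, map_pow, mul_geom_sum]

theorem cyclicSum_mul_cyclicSum_pow (t : G) (a m : ℕ) :
    cyclicSum k t a * cyclicSum k (t ^ a) m = cyclicSum k t (a * m) := by
  induction m with
  | zero => simp [cyclicSum]
  | succ m ih =>
    simp only [cyclicSum] at ih ⊢
    rw [Finset.sum_range_succ, mul_add, ih, mul_add, mul_one, Finset.sum_range_add, Finset.sum_mul]
    simp only [← pow_mul, ← map_mul, ← pow_add, add_comm]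

theorem augmentation_cyclicSum (t : G) (n : ℕ) : augmentation k (cyclicSum k t n) = n := by
  simp only [cyclicSum, map_sum, augmentation_of, Finset.sum_const, Finset.card_range, nsmul_one]

variable {k}

/-- The `k`-linear projection of `k[G]` onto the span of a transversal of `G ⧸ ⟨t⟩`. -/
noncomputable def transversalProj (t : G) : k[G] →ₗ[k] k[G] := by
  classical exact (MonoidAlgebra.basis G k).constr k fun g =>
    if ((g : G ⧸ Subgroup.zpowers t)).out = g then of k G g else 0

open Classical in
theorem transversalProj_of (t g : G) : transversalProj t (of k G g) =
    if ((g : G ⧸ Subgroup.zpowers t)).out = g then of k G g else 0 := by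
  simp only [transversalProj, of_apply, ← MonoidAlgebra.basis_apply, Module.Basis.constr_basis]

theorem existsUnique_pow_out_eq {t : G} (ht : IsOfFinOrder t) (g : G) :
    ∃! i, i ∈ Finset.range (orderOf t) ∧ (g : G ⧸ Subgroup.zpowers t).out = g * t ^ i := by
  have hmem : g⁻¹ * (g : G ⧸ Subgroup.zpowers t).out ∈ Subgroup.zpowers t :=
    QuotientGroup.eq.mp (QuotientGroup.out_eq' _).symm
  classical
  obtain ⟨i, hi, hgi⟩ := Finset.mem_image.mp (ht.mem_zpowers_iff_mem_range_orderOf.mp hmem)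
  refine ⟨i, ⟨hi, by rw [hgi, mul_inv_cancel_left]⟩, ?_⟩
  rintro j ⟨hj, hgj⟩
  refine pow_injOn_Iio_orderOf (Finset.mem_range.mp hj) (Finset.mem_range.mp hi) ?_
  simp only [hgi, hgj, inv_mul_cancel_left]

theorem sum_transversalProj {t : G} (ht : IsOfFinOrder t) (x : k[G]) :
    ∑ i ∈ Finset.range (orderOf t),
      transversalProj t (x * of k G (t ^ i)) * of k G (t⁻¹ ^ i) = x := by
  induction x using MonoidAlgebra.induction_on with
  | add x y hx hy => simp only [add_mul, map_add, Finset.sum_add_distrib, hx, hy]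
  | smul c x hx => simp only [smul_mul_assoc, map_smul, ← Finset.smul_sum, hx]
  | of g =>
    obtain ⟨i, ⟨hi, hgi⟩, huniq⟩ := existsUnique_pow_out_eq ht g
    have hcoset (j : ℕ) : ((g * t ^ j : G) : G ⧸ Subgroup.zpowers t) = g :=
      QuotientGroup.mk_mul_of_mem _ (pow_mem (Subgroup.mem_zpowers t) j)
    rw [Finset.sum_eq_single_of_mem i hi]
    · rw [← map_mul, transversalProj_of, hcoset, if_pos hgi, ← map_mul]
      simp
    · intro j hj hji
      rw [← map_mul, transversalProj_of, hcoset, if_neg fun h => hji (huniq j ⟨hj, h⟩), zero_mul]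

theorem exists_eq_mul_cyclicSum {t : G} (ht : IsOfFinOrder t) {x : k[G]}
    (hx : x * (of k G t - 1) = 0) : ∃ y, x = y * cyclicSum k t (orderOf t) := by
  have hinv : x * of k G t⁻¹ = x := by
    have hxt : x * of k G t = x := by simpa [mul_sub, sub_eq_zero] using hx
    conv_lhs => rw [← hxt, mul_assoc, ← map_mul, mul_inv_cancel, map_one, mul_one]
  have hpow (i : ℕ) : x * of k G (t⁻¹ ^ i) = x := by
    induction i with
    | zero => rw [pow_zero, map_one, mul_one]
    | succ i ih => rw [pow_succ, map_mul, ← mul_assoc, ih, hinv]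
  refine ⟨transversalProj t⁻¹ x, ?_⟩
  conv_lhs => rw [← sum_transversalProj ht.inv x]
  simp only [hpow, inv_inv, orderOf_inv, cyclicSum, Finset.mul_sum]

theorem exists_eq_mul_of_sub_one {t : G} (ht : IsOfFinOrder t) {x : k[G]}
    (hx : x * cyclicSum k t (orderOf t) = 0) : ∃ y, x = y * (of k G t - 1) := by
  have hsum : ∑ i ∈ Finset.range (orderOf t), transversalProj t (x * of k G (t ^ i)) = 0 := by
    rw [← map_sum, ← Finset.mul_sum, ← cyclicSum, hx, map_zero]
  have hfactor (i : ℕ) : of k G (t⁻¹ ^ i) - 1 =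
      -(of k G (t⁻¹ ^ i) * cyclicSum k t i) * (of k G t - 1) := by
    rw [neg_mul, mul_assoc, cyclicSum_mul_of_sub_one, mul_sub, ← map_mul, inv_pow, inv_mul_cancel,
      map_one, mul_one, neg_sub]
  refine ⟨∑ i ∈ Finset.range (orderOf t), transversalProj t (x * of k G (t ^ i)) *
    -(of k G (t⁻¹ ^ i) * cyclicSum k t i), ?_⟩
  calc x = ∑ i ∈ Finset.range (orderOf t),
        transversalProj t (x * of k G (t ^ i)) * (of k G (t⁻¹ ^ i) - 1) := by
        simp only [mul_sub, mul_one, Finset.sum_sub_distrib, hsum, sub_zero, sum_transversalProj ht]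
    _ = _ := by simp only [hfactor, Finset.sum_mul, mul_assoc]

end CyclicSum

section CrossedHom

variable {k G M : Type*} [CommRing k] [Group G] [AddCommGroup M] [Module k[G] M]

variable (k G M) in
/-- The action of `G` on a `k[G]`-module `M`, as needed to form the semidirect product
`Multiplicative M ⋊ G` of affine transformations. -/
noncomputable def mulActionHom : G →* MulAut (Multiplicative M) :=
  ((MulAutMultiplicative M).symm.toMonoidHom.comp (DistribMulAction.toAddAut k[G]ˣ M)).comp
    (of k G).toHomUnits

@[simp]
theorem mulActionHom_apply (g : G) (x : Multiplicative M) :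
    mulActionHom k G M g x = Multiplicative.ofAdd (of k G g • x.toAdd) :=
  rfl

theorem semidirectProduct_mk_pow (x : M) (g : G) (n : ℕ) :
    (⟨Multiplicative.ofAdd x, g⟩ : Multiplicative M ⋊[mulActionHom k G M] G) ^ n =
      ⟨Multiplicative.ofAdd (cyclicSum k g n • x), g ^ n⟩ := by
  induction n with
  | zero => simp [cyclicSum]
  | succ n ih =>
    rw [pow_succ, ih, cyclicSum, cyclicSum, Finset.sum_range_succ, add_smul, pow_succ]
    rfl

variable [Module k M] [IsScalarTower k k[G] M]

theorem constr_mul_of_sub_one {δ : G → M} (hδ : ∀ g h, δ (g * h) = δ g + of k G g • δ h)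
    (y : k[G]) (g : G) :
    (MonoidAlgebra.basis G k).constr k δ (y * (of k G g - 1)) = y • δ g := by
  have hof (h : G) : (MonoidAlgebra.basis G k).constr k δ (of k G h) = δ h := by
    rw [of_apply, ← MonoidAlgebra.basis_apply, Module.Basis.constr_basis]
  induction y using MonoidAlgebra.induction_on with
  | of h => rw [mul_sub, mul_one, ← map_mul, map_sub, hof, hof, hδ, add_sub_cancel_left]
  | add x y hx hy => rw [add_mul, map_add, hx, hy, add_smul]
  | smul c x hx => rw [smul_mul_assoc, map_smul, hx, smul_assoc]

end CrossedHom

section Amalgam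

/-- The group `G` is the amalgamated product of the cyclic groups of order `a * m` generated by `s`
and by the `t i`, along their subgroups of order `m` generated by `s ^ a` and `t i ^ a`. This is
encoded by the presentation, with the universal property tested on groups in `Type`. -/
structure IsCyclicAmalgam {G κ : Type*} [Group G] (a m : ℕ) (s : G) (t : κ → G) : Prop where
  pow_mul_eq_one : s ^ (a * m) = 1
  pow_eq_pow (i : κ) : t i ^ a = s ^ a
  closure_eq_top : Subgroup.closure (insert s (Set.range t)) = ⊤
  exists_lift {K : Type} [Group K] (x : K) (y : κ → K) (hx : x ^ (a * m) = 1)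
    (hy : ∀ i, y i ^ a = x ^ a) : ∃ θ : G →* K, θ s = x ∧ ∀ i, θ (t i) = y i

namespace IsCyclicAmalgam

variable {G κ : Type*} [Group G] {a m : ℕ} {s : G} {t : κ → G}

section

variable (h : IsCyclicAmalgam a m s t)
include h

theorem commute_pow (g : G) : Commute (s ^ a) g := by
  induction h.closure_eq_top ▸ Subgroup.mem_top g using Subgroup.closure_induction with
  | mem x hx =>
    obtain rfl | ⟨i, rfl⟩ := hx
    · exact Commute.pow_self _ _
    · exact h.pow_eq_pow i ▸ Commute.pow_self _ _
  | one => exact Commute.one_right _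
  | mul x y _ _ hx hy => exact hx.mul_right hy
  | inv x _ hx => exact hx.inv_right

theorem pow_mul_eq_one' (i : κ) : t i ^ (a * m) = 1 := by
  rw [pow_mul, h.pow_eq_pow, ← pow_mul, h.pow_mul_eq_one]

theorem exists_hom_zmod : ∃ θ : G →* Multiplicative (ZMod (a * m)),
    θ s = Multiplicative.ofAdd 1 ∧ ∀ i, θ (t i) = Multiplicative.ofAdd 1 :=
  h.exists_lift _ _ (by rw [← ofAdd_nsmul]; simp) fun _ => rfl

theorem orderOf_base : orderOf s = a * m := by
  obtain ⟨θ, hs, -⟩ := h.exists_hom_zmod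
  refine Nat.dvd_antisymm (orderOf_dvd_of_pow_eq_one h.pow_mul_eq_one) ?_
  simpa [hs] using orderOf_map_dvd θ s

theorem orderOf_apply (i : κ) : orderOf (t i) = a * m := by
  obtain ⟨θ, -, ht⟩ := h.exists_hom_zmod
  refine Nat.dvd_antisymm (orderOf_dvd_of_pow_eq_one (h.pow_mul_eq_one' i)) ?_
  simpa [ht] using orderOf_map_dvd θ (t i)

theorem orderOf_pow [NeZero a] : orderOf (s ^ a) = m := by
  rw [orderOf_pow_of_dvd (NeZero.ne a) (h.orderOf_base ▸ dvd_mul_right a m), h.orderOf_base,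
    Nat.mul_div_cancel_left m (NeZero.pos a)]

theorem isOfFinOrder_base [NeZero a] [NeZero m] : IsOfFinOrder s :=
  isOfFinOrder_iff_pow_eq_one.mpr ⟨a * m, NeZero.pos _, h.pow_mul_eq_one⟩

theorem isOfFinOrder_apply [NeZero a] [NeZero m] (i : κ) : IsOfFinOrder (t i) :=
  isOfFinOrder_iff_pow_eq_one.mpr ⟨a * m, NeZero.pos _, h.pow_mul_eq_one' i⟩

end

section AnnihilatorOfCyclicSum

variable {k : Type*} [CommRing k] (h : IsCyclicAmalgam a m s t)
include h

theorem commute_cyclicSum (n : ℕ) (x : k[G]) : Commute (cyclicSum k (s ^ a) n) x := by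
  induction x using MonoidAlgebra.induction_on with
  | of g => exact Commute.sum_left _ _ _ fun i _ => ((h.commute_pow g).pow_left i).map (of k G)
  | add x y hx hy => exact hx.add_right hy
  | smul c x hx => exact hx.smul_right c

theorem cyclicSum_pow_mul_cyclicSum :
    cyclicSum k (s ^ a) m * cyclicSum k s a = cyclicSum k s (a * m) := by
  rw [(h.commute_cyclicSum m _).eq, cyclicSum_mul_cyclicSum_pow]

theorem exists_eq_mul_of_mul_cyclicSum_eq_zero [NeZero a] [NeZero m] (i : κ) {x : k[G]}
    (hx : x * cyclicSum k (t i) a = 0) :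
    ∃ y, x = y * ((of k G (t i) - 1) * cyclicSum k (s ^ a) m) := by
  have hxt : x * cyclicSum k (t i) (orderOf (t i)) = 0 := by
    rw [h.orderOf_apply, ← cyclicSum_mul_cyclicSum_pow, ← mul_assoc, hx, zero_mul]
  obtain ⟨y, rfl⟩ := exists_eq_mul_of_sub_one (h.isOfFinOrder_apply i) hxt
  rw [mul_assoc, of_sub_one_mul_cyclicSum, h.pow_eq_pow] at hx
  obtain ⟨w, rfl⟩ := exists_eq_mul_cyclicSum h.isOfFinOrder_base.pow hx
  exact ⟨w, by rw [h.orderOf_pow, mul_assoc, (h.commute_cyclicSum m _).eq]⟩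

end AnnihilatorOfCyclicSum

section CrossedHom

variable {k G M κ : Type} [CommRing k] [Group G] [AddCommGroup M] [Module k[G] M]
  {a m : ℕ} {s : G} {t : κ → G}

/- A crossed homomorphism is a homomorphic section of `M ⋊ G → G`. -/
theorem exists_crossedHom (h : IsCyclicAmalgam a m s t) {x : M} {y : κ → M}
    (hx : cyclicSum k s (a * m) • x = 0)
    (hy : ∀ i, cyclicSum k (t i) a • y i = cyclicSum k s a • x) :
    ∃ δ : G → M, (∀ g g', δ (g * g') = δ g + of k G g • δ g') ∧ δ s = x ∧ ∀ i, δ (t i) = y i := by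
  obtain ⟨θ, hs, ht⟩ := h.exists_lift
    (⟨Multiplicative.ofAdd x, s⟩ : Multiplicative M ⋊[mulActionHom k G M] G)
    (fun i => ⟨Multiplicative.ofAdd (y i), t i⟩)
    (by rw [semidirectProduct_mk_pow, hx, h.pow_mul_eq_one]; rfl)
    (fun i => by rw [semidirectProduct_mk_pow, semidirectProduct_mk_pow, hy, h.pow_eq_pow])
  have hsection : SemidirectProduct.rightHom.comp θ = MonoidHom.id G := by
    refine MonoidHom.eq_of_eqOn_dense h.closure_eq_top ?_
    rintro _ (rfl | ⟨i, rfl⟩)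
    · simp [hs]
    · simp [ht]
  refine ⟨fun g => (θ g).left.toAdd, fun g g' => ?_, by simp [hs], fun i => by simp [ht]⟩
  have hright : (θ g).right = g := DFunLike.congr_fun hsection g
  simp [hright]

end CrossedHom

section Matrices

variable (k : Type*) {G κ : Type*} [CommRing k] [Group G]

/-- The first differential of the Fox resolution, with rows `s - 1` and `t i - 1`. -/
noncomputable def generatorMatrix (s : G) (t : κ → G) : Matrix (Unit ⊕ κ) Unit k[G] :=
  Matrix.of fun i _ => of k G (Sum.elim (fun _ => s) t i) - 1

variable [DecidableEq κ] (a m : ℕ) (s : G) (t : κ → G)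

/-- The matrix of Fox derivatives, whose row `inl ()` belongs to the relator `s ^ (a * m)` and
whose row `inr i` belongs to `s ^ a * t i ^ (-a)`. -/
noncomputable def relatorMatrix : Matrix (Unit ⊕ κ) (Unit ⊕ κ) k[G] :=
  Matrix.fromBlocks (Matrix.of fun _ _ => cyclicSum k s (a * m)) 0
    (Matrix.of fun _ _ => cyclicSum k s a) (Matrix.diagonal fun i => -cyclicSum k (t i) a)

/-- The relations among the rows of `relatorMatrix`. Row `inl ()` expresses that `s` commutes with
`s ^ (a * m)`, and row `inr i` that `t i` commutes with `t i ^ (a * m)`. -/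
noncomputable def syzygyMatrix : Matrix (Unit ⊕ κ) (Unit ⊕ κ) k[G] :=
  Matrix.fromBlocks (Matrix.of fun _ _ => of k G s - 1) 0 (Matrix.of fun i _ => of k G (t i) - 1)
    (Matrix.diagonal fun i => -((of k G (t i) - 1) * cyclicSum k (s ^ a) m))

variable [Fintype κ]

omit [DecidableEq κ] in
theorem vecMul_generatorMatrix (x : Unit ⊕ κ → k[G]) :
    x ᵥ* generatorMatrix k s t = fun _ =>
      x (Sum.inl ()) * (of k G s - 1) + ∑ i, x (Sum.inr i) * (of k G (t i) - 1) := by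
  ext
  simp [generatorMatrix, Matrix.vecMul, dotProduct]

theorem vecMul_relatorMatrix (x : Unit ⊕ κ → k[G]) :
    x ᵥ* relatorMatrix k a m s t = Sum.elim
      (fun _ => x (Sum.inl ()) * cyclicSum k s (a * m) + ∑ i, x (Sum.inr i) * cyclicSum k s a)
      fun i => -(x (Sum.inr i) * cyclicSum k (t i) a) := by
  rw [relatorMatrix, Matrix.vecMul_fromBlocks]
  congr 1 <;> ext <;> simp [Matrix.vecMul, dotProduct, Matrix.diagonal_apply]

theorem vecMul_syzygyMatrix (x : Unit ⊕ κ → k[G]) :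
    x ᵥ* syzygyMatrix k a m s t = Sum.elim (x ᵥ* generatorMatrix k s t)
      fun i => -(x (Sum.inr i) * ((of k G (t i) - 1) * cyclicSum k (s ^ a) m)) := by
  rw [syzygyMatrix, Matrix.vecMul_fromBlocks, vecMul_generatorMatrix]
  congr 1 <;> ext <;> simp [Matrix.vecMul, dotProduct, Matrix.diagonal_apply]

variable {a m s t} (h : IsCyclicAmalgam a m s t)
include h

theorem vecMul_relatorMatrix_vecMul_generatorMatrix (x : Unit ⊕ κ → k[G]) :
    x ᵥ* relatorMatrix k a m s t ᵥ* generatorMatrix k s t = 0 := by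
  ext
  rw [vecMul_generatorMatrix, vecMul_relatorMatrix]
  simp only [Sum.elim_inl, Sum.elim_inr, add_mul, Finset.sum_mul, mul_assoc, neg_mul,
    cyclicSum_mul_of_sub_one, h.pow_mul_eq_one, h.pow_eq_pow, map_one, sub_self, mul_zero, zero_add,
    Finset.sum_neg_distrib, add_neg_cancel, Pi.zero_apply]

end Matrices

section Exactness

variable {k G κ : Type} [CommRing k] [Group G] [DecidableEq κ] [Fintype κ]
  {a m : ℕ} {s : G} {t : κ → G}

theorem exact_relatorMatrix_generatorMatrix (h : IsCyclicAmalgam a m s t) :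
    Function.Exact (· ᵥ* relatorMatrix k a m s t) (· ᵥ* generatorMatrix k s t) := by
  let I := LinearMap.range (Matrix.vecMulLinear (relatorMatrix k a m s t))
  have hrow (i : Unit ⊕ κ) : I.mkQ (relatorMatrix k a m s t i) = 0 :=
    (Submodule.Quotient.mk_eq_zero I).mpr
      ⟨Pi.single i 1, Matrix.single_one_vecMul i _⟩
  let e (i : Unit ⊕ κ) : (Unit ⊕ κ → k[G]) ⧸ I := I.mkQ (Pi.single i 1)
  obtain ⟨δ, hδ, hs, ht⟩ := h.exists_crossedHom (x := e (.inl ())) (y := fun i => e (.inr i))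
    (by
      rw [← map_smul, ← hrow (.inl ())]
      congr 1
      ext (_ | i) <;> simp [relatorMatrix])
    (fun j => by
      rw [← map_smul, ← map_smul, eq_comm, ← sub_eq_zero, ← map_sub, ← hrow (.inr j)]
      congr 1
      ext (_ | i) <;>
        simp [relatorMatrix, Matrix.diagonal_apply, apply_ite, eq_comm, Pi.single_apply])
  intro x
  refine ⟨fun hx => ?_, ?_⟩
  · have hsum : ∑ i, x i • e i = I.mkQ x := by
      simp only [e, ← map_smul, ← map_sum]
      congr 1
      ext i
      simp [Finset.sum_apply, Pi.single_apply]
    have hδx := congr_arg ((MonoidAlgebra.basis G k).constr k δ) (congr_fun hx ())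
    simp only [vecMul_generatorMatrix, Pi.zero_apply, map_zero, map_add, map_sum,
      constr_mul_of_sub_one hδ, hs, ht] at hδx
    refine (Submodule.Quotient.mk_eq_zero I).mp ?_
    rwa [Fintype.sum_sum_type, Fintype.sum_unique, hδx, eq_comm] at hsum
  · rintro ⟨x, rfl⟩
    exact vecMul_relatorMatrix_vecMul_generatorMatrix k h x

theorem exact_relatorMatrix_syzygyMatrix (h : IsCyclicAmalgam a m s t) :
    Function.Exact (· ᵥ* relatorMatrix k a m s t) (· ᵥ* syzygyMatrix k a m s t) := by
  intro x
  refine ⟨fun hx => ?_, ?_⟩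
  · refine (h.exact_relatorMatrix_generatorMatrix x).mp ?_
    simp only [vecMul_syzygyMatrix] at hx
    exact congr_arg (fun v => v ∘ Sum.inl) hx
  · rintro ⟨x, rfl⟩
    simp only [vecMul_syzygyMatrix, vecMul_relatorMatrix_vecMul_generatorMatrix k h]
    ext (_ | i)
    · simp
    · simp only [vecMul_relatorMatrix, Sum.elim_inr, neg_mul, neg_neg]
      rw [mul_assoc, ← mul_assoc (cyclicSum k (t i) a), cyclicSum_mul_of_sub_one, h.pow_eq_pow,
        of_sub_one_mul_cyclicSum, ← pow_mul, h.pow_mul_eq_one, map_one, sub_self, mul_zero]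
      rfl

theorem vecMul_syzygyMatrix_vecMul_relatorMatrix (h : IsCyclicAmalgam a m s t)
    (x : Unit ⊕ κ → k[G]) : x ᵥ* syzygyMatrix k a m s t ᵥ* relatorMatrix k a m s t = 0 := by
  have hbase : (of k G s - 1) * cyclicSum k s (a * m) = 0 := by
    rw [of_sub_one_mul_cyclicSum, h.pow_mul_eq_one, map_one, sub_self]
  have happly (i : κ) :
      (of k G (t i) - 1) * (cyclicSum k (s ^ a) m * cyclicSum k (t i) a) = 0 := by
    rw [(h.commute_cyclicSum m _).eq, ← h.pow_eq_pow i, cyclicSum_mul_cyclicSum_pow,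
      of_sub_one_mul_cyclicSum, h.pow_mul_eq_one', map_one, sub_self]
  rw [vecMul_relatorMatrix, vecMul_syzygyMatrix, vecMul_generatorMatrix]
  ext (_ | i) : 1
  · simp only [Sum.elim_inl, Sum.elim_inr, add_mul, mul_assoc, hbase, mul_zero, zero_add, neg_mul,
      Finset.sum_mul, h.cyclicSum_pow_mul_cyclicSum, Finset.sum_neg_distrib, add_neg_cancel,
      Pi.zero_apply]
  · simp only [Sum.elim_inr, neg_mul, neg_neg, mul_assoc, happly, mul_zero, Pi.zero_apply]

theorem exact_syzygyMatrix_relatorMatrix [NeZero a] [NeZero m] (h : IsCyclicAmalgam a m s t) :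
    Function.Exact (· ᵥ* syzygyMatrix k a m s t) (· ᵥ* relatorMatrix k a m s t) := by
  intro x
  refine ⟨fun hx => ?_, ?_⟩
  · simp only [vecMul_relatorMatrix] at hx
    choose y hy using fun i => h.exists_eq_mul_of_mul_cyclicSum_eq_zero i
      (neg_eq_zero.mp (congr_fun hx (.inr i)))
    have hx₀ : (x (.inl ()) + ∑ i, y i * (of k G (t i) - 1)) * cyclicSum k s (orderOf s) = 0 := by
      refine Eq.trans ?_ (congr_fun hx (.inl ()))
      simp only [Sum.elim_inl, hy, h.orderOf_base, add_mul, Finset.sum_mul, mul_assoc,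
        h.cyclicSum_pow_mul_cyclicSum]
    obtain ⟨y₀, hy₀⟩ := exists_eq_mul_of_sub_one h.isOfFinOrder_base hx₀
    refine ⟨Sum.elim (fun _ => y₀) (-y), ?_⟩
    simp only [vecMul_syzygyMatrix, vecMul_generatorMatrix]
    ext (_ | i) : 1
    · simp only [Sum.elim_inl, Sum.elim_inr, ← hy₀, Pi.neg_apply, neg_mul, Finset.sum_neg_distrib,
        add_neg_cancel_right]
    · simp only [Sum.elim_inr, Pi.neg_apply, neg_mul, neg_neg, hy i]
  · rintro ⟨x, rfl⟩
    exact h.vecMul_syzygyMatrix_vecMul_relatorMatrix x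

end Exactness

end IsCyclicAmalgam

end Amalgam

section Resolution

open CategoryTheory MonoidalCategory
open scoped TensorProduct

/-- A resolution of the trivial module `k` by free `k[G]`-modules of finite rank, with a single
generator in degree zero. The differentials are given by matrices acting on row vectors. -/
structure MatrixResolution (k G : Type) [CommRing k] [Group G] where
  cell : ℕ → Type
  [fintypeCell (n : ℕ) : Fintype (cell n)]
  [uniqueCellZero : Unique (cell 0)]
  boundary (n : ℕ) : Matrix (cell (n + 1)) (cell n) k[G]
  exact_augmentation :
    Function.Exact (· ᵥ* boundary 0) (fun x : cell 0 → k[G] => augmentation k (x default))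
  exact_boundary (n : ℕ) : Function.Exact (· ᵥ* boundary (n + 1)) (· ᵥ* boundary n)

attribute [instance] MatrixResolution.fintypeCell MatrixResolution.uniqueCellZero

section FreeRep

variable {k G α β : Type} [CommRing k] [Group G]

theorem representation_free_apply_apply (g : G) (y : α →₀ k[G]) (a : α) :
    Representation.free k G α g y a = of k G g * y a := by
  induction y using Finsupp.induction_linear with
  | zero => simp
  | add x y hx hy => simp only [map_add, Finsupp.add_apply, mul_add, hx, hy]
  | single b r =>
    induction r using MonoidAlgebra.induction_linear with
    | zero => simp
    | add x y hx hy => simp only [Finsupp.single_add, map_add, Finsupp.add_apply, mul_add, hx, hy]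
    | single h c =>
      classical
      rw [Representation.free_single_single, Finsupp.single_apply, Finsupp.single_apply]
      split_ifs <;> simp [MonoidAlgebra.single_mul_single]

/-- The augmentation of the free representation of rank one. -/
noncomputable def freeAugmentation [Unique α] : Rep.free k G α ⟶ Rep.trivial k G k :=
  Rep.ofHom
    { toLinearMap := (augmentation k).toLinearMap ∘ₗ Finsupp.lapply default
      isIntertwining' := fun g => LinearMap.ext fun x => by
        simp [representation_free_apply_apply, -of_apply] }

theorem freeAugmentation_apply [Unique α] (x : α →₀ k[G]) :
    ((freeAugmentation (k := k) (G := G) (α := α)).hom x : k) = augmentation k (x default) :=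
  rfl

variable [Fintype α] [Fintype β]

/-- The morphism of free representations given by right multiplication of row vectors by `A`. -/
noncomputable def freeVecMul (A : Matrix α β k[G]) : Rep.free k G α ⟶ Rep.free k G β :=
  Rep.ofHom
    { toLinearMap := (Finsupp.linearEquivFunOnFinite k k[G] β).symm.toLinearMap ∘ₗ
        (A.vecMulLinear.restrictScalars k) ∘ₗ (Finsupp.linearEquivFunOnFinite k k[G] α).toLinearMap
      isIntertwining' := fun g => LinearMap.ext fun x => Finsupp.ext fun b => by
        simp [representation_free_apply_apply, Matrix.vecMul, dotProduct, Finset.mul_sum,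
          mul_assoc] }

theorem freeVecMul_apply (A : Matrix α β k[G]) (x : α →₀ k[G]) :
    ((freeVecMul A).hom x : β →₀ k[G]) = Finsupp.equivFunOnFinite.symm (⇑x ᵥ* A) :=
  rfl

end FreeRep

section Exactness

variable {k G : Type} [CommRing k] [Group G]

theorem comp_eq_zero_of_exact_hom {X Y Z : Rep.{0} k G} {f : X ⟶ Y} {g : Y ⟶ Z}
    (h : Function.Exact f.hom g.hom) : f ≫ g = 0 :=
  Rep.hom_ext (Representation.IntertwiningMap.ext (LinearMap.ext fun x => h.apply_apply_eq_zero x))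

theorem exact_of_exact_hom {S : ShortComplex (Rep.{0} k G)}
    (h : Function.Exact S.f.hom S.g.hom) : S.Exact := by
  apply (forget₂ _ (ModuleCat.{0} k)).reflects_exact_of_faithful
  rw [ShortComplex.moduleCat_exact_iff]
  exact fun x hx => (h x).mp hx

variable {α β γ : Type} [Fintype α] [Fintype β] [Fintype γ] {A : Matrix α β k[G]}

theorem exact_freeVecMul {B : Matrix β γ k[G]} (h : Function.Exact (· ᵥ* A) (· ᵥ* B)) :
    Function.Exact (freeVecMul A).hom (freeVecMul B).hom := by
  intro x
  refine ⟨fun hx => ?_, ?_⟩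
  · obtain ⟨y, hy⟩ := (h x).mp (congr_arg DFunLike.coe hx)
    exact ⟨Finsupp.equivFunOnFinite.symm y, DFunLike.coe_injective hy⟩
  · rintro ⟨y, rfl⟩
    exact DFunLike.coe_injective (h.apply_apply_eq_zero y)

theorem exact_freeAugmentation [Unique β]
    (h : Function.Exact (· ᵥ* A) (fun x : β → k[G] => augmentation k (x default))) :
    Function.Exact (freeVecMul A).hom (freeAugmentation (k := k) (G := G) (α := β)).hom := by
  intro x
  refine ⟨fun hx => ?_, ?_⟩
  · obtain ⟨y, hy⟩ := (h x).mp hx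
    exact ⟨Finsupp.equivFunOnFinite.symm y, DFunLike.coe_injective hy⟩
  · rintro ⟨y, rfl⟩
    exact h.apply_apply_eq_zero y

end Exactness

namespace MatrixResolution

variable {k G : Type} [CommRing k] [Group G] (R : MatrixResolution k G)

/-- The chain complex of free representations underlying a matrix resolution. -/
noncomputable def complex : ChainComplex (Rep.{0} k G) ℕ :=
  ChainComplex.of (fun n => Rep.free k G (R.cell n)) (fun n => freeVecMul (R.boundary n)) fun n =>
    comp_eq_zero_of_exact_hom (exact_freeVecMul (R.exact_boundary n))

theorem complex_d (n : ℕ) : R.complex.d (n + 1) n = freeVecMul (R.boundary n) :=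
  ChainComplex.of_d (fun n => Rep.free k G (R.cell n)) (fun n => freeVecMul (R.boundary n)) n

/-- The augmentation of `R.complex`, as a chain map to the trivial representation. -/
noncomputable def complexAugmentation :
    R.complex ⟶ (ChainComplex.single₀ (Rep k G)).obj (Rep.trivial k G k) :=
  (R.complex.toSingle₀Equiv _).symm ⟨freeAugmentation, by
    rw [complex_d]
    exact comp_eq_zero_of_exact_hom (exact_freeAugmentation R.exact_augmentation)⟩

theorem complexAugmentation_f_zero : R.complexAugmentation.f 0 = freeAugmentation :=
  ChainComplex.toSingle₀Equiv_symm_apply_f_zero _ _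

instance : QuasiIso R.complexAugmentation where
  quasiIsoAt n := by
    cases n with
    | zero =>
      rw [ChainComplex.quasiIsoAt₀_iff, ShortComplex.quasiIso_iff_of_zeros' _ rfl rfl rfl]
      constructor
      · apply exact_of_exact_hom
        change Function.Exact (R.complex.d 1 0).hom (R.complexAugmentation.f 0).hom
        rw [complexAugmentation_f_zero, complex_d]
        exact exact_freeAugmentation R.exact_augmentation
      · change Epi (R.complexAugmentation.f 0)
        rw [complexAugmentation_f_zero]
        change Epi (Y := Rep.trivial k G k) freeAugmentation
        rw [Rep.epi_iff_surjective]
        intro c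
        refine ⟨Finsupp.single default (MonoidAlgebra.single 1 c), ?_⟩
        refine (freeAugmentation_apply _).trans ?_
        simp [augmentation]
    | succ m =>
      rw [quasiIsoAt_iff_exactAt' (hL := ChainComplex.exactAt_succ_single_obj ..),
          HomologicalComplex.exactAt_iff' _ (m + 2) (m + 1) m (by simp) (by simp)]
      apply exact_of_exact_hom
      change Function.Exact (R.complex.d (m + 2) (m + 1)).hom (R.complex.d (m + 1) m).hom
      rw [complex_d, complex_d]
      exact exact_freeVecMul (R.exact_boundary m)

/-- The projective resolution given by a matrix resolution. -/
noncomputable def toProjectiveResolution : ProjectiveResolution (Rep.trivial k G k) where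
  complex := R.complex
  projective n := inferInstanceAs (Projective (Rep.free.{0, 0, 0} k G (R.cell n)))
  π := R.complexAugmentation

end MatrixResolution

section Homology

/-- The homology of a chain complex in positive degree, computed as cycles modulo boundaries after
identifying three consecutive terms of the complex with other modules. -/
noncomputable def homologySuccEquiv {k : Type} [CommRing k] (K : ChainComplex (ModuleCat.{0} k) ℕ)
    (n : ℕ) {A B C : Type} [AddCommGroup A] [AddCommGroup B] [AddCommGroup C] [Module k A]
    [Module k B] [Module k C] {f : A →ₗ[k] B} {g : B →ₗ[k] C} (hgf : g ∘ₗ f = 0)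
    (eA : K.X (n + 2) ≃ₗ[k] A) (eB : K.X (n + 1) ≃ₗ[k] B) (eC : K.X n ≃ₗ[k] C)
    (hf : ∀ x, f (eA x) = eB (K.d (n + 2) (n + 1) x))
    (hg : ∀ x, g (eB x) = eC (K.d (n + 1) n x)) :
    K.homology (n + 1) ≃ₗ[k]
      LinearMap.ker g ⧸ (LinearMap.range f).comap (LinearMap.ker g).subtype :=
  (K.homologyIsoSc' (n + 2) (n + 1) n (by simp) (by simp) ≪≫
    ShortComplex.homologyMapIso (ShortComplex.isoMk eA.toModuleIso eB.toModuleIso eC.toModuleIso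
      (ModuleCat.hom_ext (LinearMap.ext hf)) (ModuleCat.hom_ext (LinearMap.ext hg))) ≪≫
    (ShortComplex.moduleCatMk f g hgf).moduleCatHomologyIso).toLinearEquiv ≪≫ₗ
    Submodule.quotEquivOfEq _ _ (by
      ext x
      exact exists_congr fun y => Subtype.ext_iff)

/-- The homology of `A → B → C` at `B` when the second map vanishes and `φ` is a cokernel of the
first. -/
noncomputable def kerQuotientEquivOfSurjective {k A B C T : Type} [CommRing k] [AddCommGroup A]
    [AddCommGroup B] [AddCommGroup C] [AddCommGroup T] [Module k A] [Module k B] [Module k C]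
    {f : A →ₗ[k] B} {g : B →ₗ[k] C} (hg : g = 0) {φ : B →+ T} (hφ : Function.Surjective φ)
    (h : ∀ x, φ x = 0 ↔ ∃ y, f y = x) :
    (LinearMap.ker g ⧸ (LinearMap.range f).comap (LinearMap.ker g).subtype) ≃+ T :=
  (QuotientAddGroup.quotientAddEquivOfEq <|
    AddSubgroup.ext fun x : LinearMap.ker g => (h x).symm).trans <|
  QuotientAddGroup.quotientKerEquivOfSurjective (φ.comp (LinearMap.ker g).subtype.toAddMonoidHom)
    fun y => (hφ y).imp' (fun x => ⟨x, by simp [hg]⟩) fun _ hx => hx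

section Coinvariants

variable {k G α β : Type} [CommRing k] [Group G] [Fintype α] [Fintype β]

/-- The coinvariants of the free representation on `α`, in the tensored form that computes group
homology, are the free `k`-module on `α`. -/
noncomputable def coinvariantsFreeEquiv (k G α : Type) [CommRing k] [Group G] [Fintype α] :
    (Rep.trivial k G k ⊗ Rep.free k G α).ρ.Coinvariants ≃ₗ[k] (α → k) := by
  classical exact Rep.coinvariantsTensorFreeLEquiv (Rep.trivial k G k) α ≪≫ₗ
    Finsupp.linearEquivFunOnFinite k k α

theorem coinvariantsFreeEquiv_mk_tmul (c : k) (y : α →₀ k[G]) :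
    coinvariantsFreeEquiv k G α (Representation.Coinvariants.mk _ (c ⊗ₜ[k] y)) =
      fun i => c * augmentation k (y i) := by
  classical
  induction y using Finsupp.induction_linear with
  | zero => ext; simp
  | add x y hx hy =>
    simp only [TensorProduct.tmul_add, map_add, hx, hy, Finsupp.add_apply, mul_add]
    rfl
  | single i r =>
    induction r using MonoidAlgebra.induction_linear with
    | zero => ext; simp
    | add x y hx hy =>
      simp only [Finsupp.single_add, TensorProduct.tmul_add, map_add, hx, hy, Finsupp.add_apply,
        mul_add]
      rfl
    | single g b =>
      refine (congr_arg (Finsupp.linearEquivFunOnFinite k k α)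
        (Rep.coinvariantsTensorFreeToFinsupp_mk_tmul_single (Rep.trivial k G k) c i g b)).trans ?_
      ext j
      change (Finsupp.single i (b • c) : α →₀ k) j = _
      rw [Finsupp.single_apply, Finsupp.single_apply]
      split_ifs <;> simp [augmentation, mul_comm]

theorem coinvariantsFreeEquiv_freeVecMul (A : Matrix α β k[G])
    (x : (Rep.trivial k G k ⊗ Rep.free k G α).ρ.Coinvariants) :
    coinvariantsFreeEquiv k G α x ᵥ* A.map (augmentation k) = coinvariantsFreeEquiv k G β
      ((((Rep.coinvariantsTensor k G).obj (Rep.trivial k G k)).map (freeVecMul A)).hom x) := by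
  obtain ⟨x, rfl⟩ := Representation.Coinvariants.mk_surjective _ x
  induction x using TensorProduct.induction_on with
  | zero => simp
  | add x y hx hy => simp only [map_add, Matrix.add_vecMul, hx, hy]
  | tmul c y =>
    refine Eq.trans ?_ (coinvariantsFreeEquiv_mk_tmul c ((freeVecMul A).hom y)).symm
    rw [coinvariantsFreeEquiv_mk_tmul, freeVecMul_apply]
    ext j
    simp [Matrix.vecMul, dotProduct, mul_assoc, Finset.mul_sum]

end Coinvariants

namespace MatrixResolution

variable {k G : Type} [CommRing k] [Group G] (R : MatrixResolution k G)

/-- The differential of the complex of coinvariants of a matrix resolution. -/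
noncomputable def coinvariantBoundary (n : ℕ) : (R.cell (n + 1) → k) →ₗ[k] (R.cell n → k) :=
  ((R.boundary n).map (augmentation k)).vecMulLinear

theorem coinvariantBoundary_comp (n : ℕ) :
    R.coinvariantBoundary n ∘ₗ R.coinvariantBoundary (n + 1) = 0 := by
  classical
  have hzero : R.boundary (n + 1) * R.boundary n = 0 :=
    Matrix.ext_of_single_vecMul fun i => by
      rw [← Matrix.vecMul_vecMul, Matrix.vecMul_zero]
      exact (R.exact_boundary n).apply_apply_eq_zero _
  refine LinearMap.ext fun x => ?_
  simp only [coinvariantBoundary, LinearMap.comp_apply, Matrix.vecMulLinear_apply,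
    Matrix.vecMul_vecMul, ← Matrix.map_mul, hzero, Matrix.map_zero, map_zero, Matrix.vecMul_zero,
    LinearMap.zero_apply]

theorem coinvariantsFreeEquiv_complex_d (n : ℕ)
    (x : (R.complex.coinvariantsTensorObj (Rep.trivial k G k)).X (n + 1)) :
    R.coinvariantBoundary n (coinvariantsFreeEquiv k G (R.cell (n + 1)) x) =
      coinvariantsFreeEquiv k G (R.cell n)
        ((R.complex.coinvariantsTensorObj (Rep.trivial k G k)).d (n + 1) n x) := by
  refine (coinvariantsFreeEquiv_freeVecMul (R.boundary n) x).trans ?_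
  rw [← R.complex_d]
  rfl

/-- Group homology with trivial coefficients, computed from a matrix resolution. -/
noncomputable def groupHomologySuccEquiv [DecidableEq G] (n : ℕ) :
    groupHomology (Rep.trivial k G k) (n + 1) ≃ₗ[k]
      LinearMap.ker (R.coinvariantBoundary n) ⧸
        (LinearMap.range (R.coinvariantBoundary (n + 1))).comap
          (LinearMap.ker (R.coinvariantBoundary n)).subtype :=
  (groupHomologyIso (Rep.trivial k G k) (n + 1) R.toProjectiveResolution).toLinearEquiv ≪≫ₗ
    homologySuccEquiv _ n (R.coinvariantBoundary_comp n)
      (coinvariantsFreeEquiv k G (R.cell (n + 2)))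
      (coinvariantsFreeEquiv k G (R.cell (n + 1))) (coinvariantsFreeEquiv k G (R.cell n))
      (R.coinvariantsFreeEquiv_complex_d (n + 1)) (R.coinvariantsFreeEquiv_complex_d n)

end MatrixResolution

end Homology

end Resolution

section BarComplex

theorem barDiff_eq (P : Type) [Group P] (n : ℕ) :
    barDiff P n = (groupHomology.inhomogeneousChains.d (Rep.trivial ℤ P ℤ) n).hom := by
  have hinner (g : Fin (n + 1) → P) (j : Fin n) : Fin.contractNth j.castSucc (· * ·) g =
      fun i : Fin n => if (i : ℕ) < j then g i.castSucc
        else if (i : ℕ) = j then g i.castSucc * g i.succ else g i.succ := by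
    ext i
    simp [Fin.contractNth]
  have hlast (g : Fin (n + 1) → P) :
      Fin.contractNth (Fin.last n) (· * ·) g = fun i : Fin n => g i.castSucc := by
    ext i
    simp [Fin.contractNth]
  refine Finsupp.lhom_ext' fun g => LinearMap.ext_ring ?_
  refine Eq.trans ?_ (groupHomology.inhomogeneousChains.d_single
    (A := Rep.trivial ℤ P ℤ) n g (1 : ℤ)).symm
  rw [Fin.sum_univ_castSucc]
  simp only [hinner, hlast, LinearMap.comp_apply, Finsupp.lsingle_apply, barDiff,
    Finsupp.lift_apply, Finsupp.sum_single_index, zero_smul, one_smul, add_assoc,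
    Fin.val_castSucc, Fin.val_last]
  rfl

theorem barDiff_comp (P : Type) [Group P] (n : ℕ) : barDiff P n ∘ₗ barDiff P (n + 1) = 0 := by
  rw [barDiff_eq, barDiff_eq, ← ModuleCat.hom_comp, groupHomology.inhomogeneousChains.d_comp_d]
  rfl

/-- The homology of the explicit bar complex is `groupHomology`. -/
noncomputable def barHomologySuccEquiv (P : Type) [Group P] (n : ℕ) :
    barHomologySucc P n ≃+ groupHomology (Rep.trivial ℤ P ℤ) (n + 1) :=
  (homologySuccEquiv (groupHomology.inhomogeneousChains (Rep.trivial ℤ P ℤ)) n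
    (barDiff_comp P n) (LinearEquiv.refl ℤ _) (LinearEquiv.refl ℤ _) (LinearEquiv.refl ℤ _)
    (fun x => by rw [barDiff_eq, groupHomology.inhomogeneousChains.d_def]; rfl)
    (fun x => by rw [barDiff_eq, groupHomology.inhomogeneousChains.d_def]; rfl)).symm.toAddEquiv

end BarComplex

namespace IsCyclicAmalgam

section MatrixResolution

variable {k G κ : Type} [CommRing k] [Group G] [DecidableEq κ] [Fintype κ]
  {a m : ℕ} {s : G} {t : κ → G}

omit [DecidableEq κ] in
theorem exact_generatorMatrix_augmentation (h : IsCyclicAmalgam a m s t) :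
    Function.Exact (· ᵥ* generatorMatrix k s t)
      (fun x : Unit → k[G] => augmentation k (x default)) := by
  intro x
  refine ⟨fun hx => ?_, ?_⟩
  · let I : Ideal k[G] := (LinearMap.range (generatorMatrix k s t).vecMulLinear).map
      (LinearMap.proj ())
    classical
    have hI (i : Unit ⊕ κ) : generatorMatrix k s t i () ∈ I :=
      ⟨_, ⟨Pi.single i 1, Matrix.single_one_vecMul i _⟩, rfl⟩
    obtain ⟨-, ⟨y, rfl⟩, hy⟩ := ker_augmentation_le_of_closure_eq_top h.closure_eq_top (I := I)
      (by rintro _ (rfl | ⟨i, rfl⟩); exacts [hI (.inl ()), hI (.inr i)]) hx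
    exact ⟨y, funext fun _ => hy⟩
  · rintro ⟨y, rfl⟩
    simp only [vecMul_generatorMatrix, map_add, map_sum, map_mul, map_sub, augmentation_of, map_one,
      sub_self, mul_zero, Finset.sum_const_zero, add_zero]

/-- The Fox resolution, which is periodic of period two from degree one on. -/
noncomputable def matrixResolution [NeZero a] [NeZero m] (h : IsCyclicAmalgam a m s t) :
    MatrixResolution k G where
  cell
    | 0 => Unit
    | _ + 1 => Unit ⊕ κ
  fintypeCell
    | 0 => inferInstanceAs (Fintype Unit)
    | _ + 1 => inferInstanceAs (Fintype (Unit ⊕ κ))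
  uniqueCellZero := inferInstanceAs (Unique Unit)
  boundary
    | 0 => generatorMatrix k s t
    | n + 1 => if Even n then relatorMatrix k a m s t else syzygyMatrix k a m s t
  exact_augmentation := h.exact_generatorMatrix_augmentation
  exact_boundary
    | 0 => h.exact_relatorMatrix_generatorMatrix
    | n + 1 => by
      by_cases hn : Even n
      · simp only [Nat.even_add_one, hn, not_true, if_true, if_false]
        exact h.exact_syzygyMatrix_relatorMatrix
      · simp only [Nat.even_add_one, hn, not_false_iff, if_true, if_false]
        exact h.exact_relatorMatrix_syzygyMatrix

end MatrixResolution

section CoinvariantBoundary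

variable {k G κ : Type} [CommRing k] [Group G] [DecidableEq κ] [Fintype κ]
  {a m : ℕ} {s : G} {t : κ → G}

omit [DecidableEq κ] [Fintype κ] in
theorem map_augmentation_generatorMatrix :
    (generatorMatrix k s t).map (augmentation k) = 0 := by
  ext
  simp [generatorMatrix, -of_apply]

omit [Fintype κ] in
theorem map_augmentation_syzygyMatrix :
    (syzygyMatrix k a m s t).map (augmentation k) = 0 := by
  ext (_ | i) (_ | j) <;> simp [syzygyMatrix, Matrix.diagonal_apply, apply_ite, -of_apply]

theorem vecMul_map_augmentation_relatorMatrix (x : Unit ⊕ κ → k) :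
    x ᵥ* (relatorMatrix k a m s t).map (augmentation k) = Sum.elim
      (fun _ => x (.inl ()) * (a * m) + ∑ i, x (.inr i) * a) fun i => -(x (.inr i) * a) := by
  rw [relatorMatrix, Matrix.fromBlocks_map, Matrix.vecMul_fromBlocks]
  congr 1 <;> ext <;> simp [Matrix.vecMul, dotProduct, augmentation_cyclicSum]

variable [NeZero a] [NeZero m] (h : IsCyclicAmalgam a m s t)

theorem coinvariantBoundary_of_even {n : ℕ} (hn : Even n) :
    (h.matrixResolution (k := k)).coinvariantBoundary n = 0 := by
  refine LinearMap.ext fun x => ?_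
  cases n with
  | zero =>
    exact (congr_arg (x ᵥ* ·) map_augmentation_generatorMatrix).trans (Matrix.vecMul_zero x)
  | succ n =>
    refine (congr_arg (fun A : Matrix (Unit ⊕ κ) (Unit ⊕ κ) k[G] => x ᵥ* A.map (augmentation k))
      (if_neg (Nat.even_add_one.mp hn))).trans ?_
    exact (congr_arg (x ᵥ* ·) map_augmentation_syzygyMatrix).trans (Matrix.vecMul_zero x)

theorem coinvariantBoundary_succ_of_even {n : ℕ} (hn : Even n) :
    (h.matrixResolution (k := k)).coinvariantBoundary (n + 1) =
      ((relatorMatrix k a m s t).map (augmentation k)).vecMulLinear :=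
  congr_arg (fun A : Matrix (Unit ⊕ κ) (Unit ⊕ κ) k[G] => (A.map (augmentation k)).vecMulLinear)
    (if_pos hn)

end CoinvariantBoundary

section IntegralHomology

variable {G κ : Type} [Group G] {a m : ℕ} {s : G} {t : κ → G}

/-- The projection to the cokernel of the augmented `relatorMatrix` over `ℤ`. The first factor is
generated by the class of `s`, and the others by the classes of the `t i * s⁻¹`. -/
def reduceMod (a m : ℕ) (κ : Type) [Fintype κ] :
    (Unit ⊕ κ → ℤ) →+ ZMod (a * m) × (κ → ZMod a) where
  toFun v := (((∑ i, v i : ℤ) : ZMod (a * m)), fun i => (v (.inr i) : ZMod a))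
  map_zero' := by ext <;> simp
  map_add' v w := by
    ext
    · simp only [Pi.add_apply, Finset.sum_add_distrib, Int.cast_add, Prod.fst_add]
    · simp only [Pi.add_apply, Int.cast_add, Prod.snd_add]

variable [Fintype κ]

theorem reduceMod_surjective (a m : ℕ) : Function.Surjective (reduceMod a m κ) := by
  rintro ⟨c, d⟩
  obtain ⟨c, rfl⟩ := ZMod.intCast_surjective c
  choose v hv using fun i => ZMod.intCast_surjective (d i)
  refine ⟨Sum.elim (fun _ => c - ∑ i, v i) v, Prod.ext ?_ (funext hv)⟩
  simp [reduceMod]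

variable [DecidableEq κ]

theorem reduceMod_eq_zero_iff (x : Unit ⊕ κ → ℤ) :
    reduceMod a m κ x = 0 ↔ ∃ y, y ᵥ* (relatorMatrix ℤ a m s t).map (augmentation ℤ) = x := by
  simp only [vecMul_map_augmentation_relatorMatrix]
  refine ⟨fun hx => ?_, ?_⟩
  · obtain ⟨c, hc⟩ := (ZMod.intCast_zmod_eq_zero_iff_dvd _ _).mp (congr_arg Prod.fst hx)
    choose d hd using fun i =>
      (ZMod.intCast_zmod_eq_zero_iff_dvd _ _).mp (congr_fun (congr_arg Prod.snd hx) i)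
    refine ⟨Sum.elim (fun _ => c) (-d), ?_⟩
    ext (_ | i)
    · rw [Fintype.sum_sum_type, Fintype.sum_unique, Nat.cast_mul] at hc
      simp only [Sum.elim_inl, Sum.elim_inr, Pi.neg_apply, neg_mul, Finset.sum_neg_distrib]
      simp only [hd, mul_comm (a : ℤ) (d _)] at hc
      linear_combination -hc
    · simp [hd, mul_comm]
  · rintro ⟨y, rfl⟩
    ext i
    · simp only [reduceMod, AddMonoidHom.coe_mk, ZeroHom.coe_mk, Fintype.sum_sum_type,
        Sum.elim_inl, Sum.elim_inr, Finset.univ_unique, Finset.sum_const, Finset.card_singleton,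
        one_smul, Finset.sum_neg_distrib, add_neg_cancel_right, Prod.fst_zero]
      rw [← Nat.cast_mul, Int.cast_mul, Int.cast_natCast, ZMod.natCast_self, mul_zero]
    · simp [reduceMod]

theorem vecMul_map_augmentation_relatorMatrix_injective [NeZero a] [NeZero m] :
    Function.Injective
      ((relatorMatrix ℤ a m s t).map (augmentation ℤ)).vecMulLinear := by
  refine LinearMap.ker_eq_bot.mp (LinearMap.ker_eq_bot'.mpr fun x hx => ?_)
  rw [Matrix.vecMulLinear_apply, vecMul_map_augmentation_relatorMatrix] at hx
  have hinr (i : κ) : x (.inr i) = 0 := by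
    simpa [NeZero.ne a] using congr_fun hx (.inr i)
  have hinl : x (.inl ()) = 0 := by
    simpa [hinr, NeZero.ne a, NeZero.ne m] using congr_fun hx (.inl ())
  ext (_ | i)
  exacts [hinl, hinr i]

variable [NeZero a] [NeZero m]

/-- The homology of a cyclic amalgam, computed from its Fox resolution. -/
noncomputable def barHomologySuccEquivCoinvariants (h : IsCyclicAmalgam a m s t) (n : ℕ) :
    barHomologySucc G n ≃+
      LinearMap.ker ((h.matrixResolution (k := ℤ)).coinvariantBoundary n) ⧸
        (LinearMap.range ((h.matrixResolution (k := ℤ)).coinvariantBoundary (n + 1))).comap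
          (LinearMap.ker ((h.matrixResolution (k := ℤ)).coinvariantBoundary n)).subtype := by
  classical
  exact (barHomologySuccEquiv G n).trans
    ((h.matrixResolution (k := ℤ)).groupHomologySuccEquiv n).toAddEquiv

/-- The homology of a cyclic amalgam in odd degree `n + 1`. -/
noncomputable def barHomologySuccEquivOfEven (h : IsCyclicAmalgam a m s t) {n : ℕ}
    (hn : Even n) : barHomologySucc G n ≃+ ZMod (a * m) × (κ → ZMod a) :=
  (h.barHomologySuccEquivCoinvariants n).trans <|
    kerQuotientEquivOfSurjective (h.coinvariantBoundary_of_even hn) (reduceMod_surjective a m) <| by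
      rw [h.coinvariantBoundary_succ_of_even hn]
      exact reduceMod_eq_zero_iff

omit [DecidableEq κ] [Fintype κ] in
theorem subsingleton_barHomologySucc_of_odd [Finite κ] (h : IsCyclicAmalgam a m s t) {n : ℕ}
    (hn : Odd n) : Subsingleton (barHomologySucc G n) := by
  classical
  have := Fintype.ofFinite κ
  obtain ⟨l, rfl⟩ := hn
  refine (h.barHomologySuccEquivCoinvariants (2 * l + 1)).toEquiv.subsingleton_congr.mpr ?_
  have hinj : Function.Injective
      ((h.matrixResolution (k := ℤ)).coinvariantBoundary (2 * l + 1)) := by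
    rw [h.coinvariantBoundary_succ_of_even (even_two_mul l)]
    exact vecMul_map_augmentation_relatorMatrix_injective
  have := (Submodule.subsingleton_iff_eq_bot).mpr (LinearMap.ker_eq_bot.mpr hinj)
  infer_instance

/-- The abelianization of a cyclic amalgam, identified through its first homology. -/
noncomputable def abelianizationMulEquiv (h : IsCyclicAmalgam a m s t) :
    Abelianization G ≃* Multiplicative (ZMod (a * m) × (κ → ZMod a)) :=
  AddEquiv.toMultiplicativeRight <|
    (TensorProduct.rid ℤ (Additive (Abelianization G))).symm.toAddEquiv.trans <|
    (groupHomology.H1AddEquivOfIsTrivial (Rep.trivial ℤ G ℤ)).symm.trans <|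
    (barHomologySuccEquiv G 0).symm.trans (h.barHomologySuccEquivOfEven Even.zero)

end IntegralHomology

end IsCyclicAmalgam

theorem homology_of_amalgam_three_ZFour_along_ZTwo_general {G κ : Type} [Group G] [Finite κ]
    {a m : ℕ} [NeZero a] [NeZero m] {s : G} {t : κ → G} (h : IsCyclicAmalgam a m s t) (i : ℕ)
    (hi : 0 < i) :
    (Odd i → Nonempty (barHomologySucc G (i - 1) ≃+ ZMod (a * m) × (κ → ZMod a))) ∧
    (Even i → Subsingleton (barHomologySucc G (i - 1))) ∧
    Nonempty (Abelianization G ≃* Multiplicative (ZMod (a * m) × (κ → ZMod a))) := by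
  classical
  have := Fintype.ofFinite κ
  exact ⟨fun hodd => ⟨h.barHomologySuccEquivOfEven (hodd.tsub_odd odd_one)⟩,
    fun heven => h.subsingleton_barHomologySucc_of_odd (Nat.Even.sub_odd hi heven odd_one),
    ⟨h.abelianizationMulEquiv⟩⟩

section AmalgamThreeZFourAlongZTwo

theorem zmodTwoToFour_intCast (n : ℤ) : zmodTwoToFour n = (2 * n : ℤ) := by
  rw [zmodTwoToFour, ZMod.lift_coe]
  simp [mul_comm]

/-- The homomorphism out of `ℤ/4` sending the generator to `x`. -/
noncomputable def zmodFourHom {K : Type*} [Group K] {x : K} (hx : x ^ 4 = 1) :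
    Multiplicative (ZMod 4) →* K :=
  AddMonoidHom.toMultiplicativeLeft (ZMod.lift 4 ⟨zmultiplesHom (Additive K) (Additive.ofMul x), by
    rw [zmultiplesHom_apply, natCast_zsmul, ← ofMul_pow, hx, ofMul_one]⟩)

theorem zmodFourHom_ofAdd_intCast {K : Type*} [Group K] {x : K} (hx : x ^ 4 = 1) (n : ℤ) :
    zmodFourHom hx (Multiplicative.ofAdd (n : ZMod 4)) = x ^ n := by
  simp [zmodFourHom]

/-- The inclusion of the `i`-th factor. -/
noncomputable def amalgamOf (i : Fin 3) : Multiplicative (ZMod 4) →* amalgamThreeZFourAlongZTwo :=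
  Monoid.PushoutI.of (φ := fun _ : Fin 3 => AddMonoidHom.toMultiplicative zmodTwoToFour) i

/-- The inclusion of the amalgamated subgroup. -/
noncomputable def amalgamBase : Multiplicative (ZMod 2) →* amalgamThreeZFourAlongZTwo :=
  Monoid.PushoutI.base (fun _ : Fin 3 => AddMonoidHom.toMultiplicative zmodTwoToFour)

theorem amalgamOf_zmodTwoToFour (i : Fin 3) (y : Multiplicative (ZMod 2)) :
    amalgamOf i (AddMonoidHom.toMultiplicative zmodTwoToFour y) = amalgamBase y :=
  Monoid.PushoutI.of_apply_eq_base _ i y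

/-- The generator of the `i`-th factor. -/
noncomputable def amalgamGenerator (i : Fin 3) : amalgamThreeZFourAlongZTwo :=
  amalgamOf i (Multiplicative.ofAdd 1)

theorem amalgamOf_ofAdd_natCast (i : Fin 3) (n : ℕ) :
    amalgamOf i (Multiplicative.ofAdd (n : ZMod 4)) = amalgamGenerator i ^ n := by
  rw [amalgamGenerator, ← map_pow, ← ofAdd_nsmul, nsmul_one]

theorem amalgamGenerator_pow_four (i : Fin 3) : amalgamGenerator i ^ 4 = 1 := by
  rw [← amalgamOf_ofAdd_natCast, ZMod.natCast_self, ofAdd_zero, map_one]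

theorem amalgamGenerator_sq_eq (i j : Fin 3) : amalgamGenerator i ^ 2 = amalgamGenerator j ^ 2 := by
  have hbase (i : Fin 3) : amalgamGenerator i ^ 2 = amalgamBase (Multiplicative.ofAdd 1) := by
    rw [← amalgamOf_ofAdd_natCast, ← amalgamOf_zmodTwoToFour i]
    exact congr_arg (amalgamOf i ∘ Multiplicative.ofAdd) (zmodTwoToFour_intCast 1).symm
  rw [hbase, hbase]

theorem closure_range_amalgamGenerator : Subgroup.closure (Set.range amalgamGenerator) = ⊤ := by
  have hof (i : Fin 3) (y : Multiplicative (ZMod 4)) :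
      amalgamOf i y ∈ Subgroup.closure (Set.range amalgamGenerator) := by
    obtain ⟨n, hn⟩ := ZMod.natCast_zmod_surjective y.toAdd
    rw [← ofAdd_toAdd y, ← hn, amalgamOf_ofAdd_natCast]
    exact pow_mem (Subgroup.subset_closure (Set.mem_range_self i)) n
  refine (Subgroup.eq_top_iff' _).mpr fun x => ?_
  refine Monoid.PushoutI.induction_on
    (motive := fun x => x ∈ Subgroup.closure (Set.range amalgamGenerator)) x hof (fun y => ?_)
    fun _ _ => mul_mem
  exact amalgamOf_zmodTwoToFour 0 y ▸ hof 0 _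

theorem exists_amalgamGenerator_lift {K : Type*} [Group K] (x : Fin 3 → K)
    (hfour : ∀ i, x i ^ 4 = 1) (hsq : ∀ i j, x i ^ 2 = x j ^ 2) :
    ∃ θ : amalgamThreeZFourAlongZTwo →* K, ∀ i, θ (amalgamGenerator i) = x i := by
  have hcomp (i : Fin 3) :
      (zmodFourHom (hfour i)).comp (AddMonoidHom.toMultiplicative zmodTwoToFour) =
        (zmodFourHom (hfour 0)).comp (AddMonoidHom.toMultiplicative zmodTwoToFour) := by
    refine MonoidHom.ext fun y => ?_
    obtain ⟨n, hn⟩ := ZMod.intCast_surjective y.toAdd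
    have hy : AddMonoidHom.toMultiplicative zmodTwoToFour y =
        Multiplicative.ofAdd ((2 * n : ℤ) : ZMod 4) := by
      rw [← zmodTwoToFour_intCast, hn]
      rfl
    rw [MonoidHom.comp_apply, MonoidHom.comp_apply, hy, zmodFourHom_ofAdd_intCast,
      zmodFourHom_ofAdd_intCast, zpow_mul, zpow_mul, zpow_ofNat, zpow_ofNat, hsq i 0]
  refine ⟨Monoid.PushoutI.lift (fun i => zmodFourHom (hfour i)) _ hcomp, fun i => ?_⟩
  refine (Monoid.PushoutI.lift_of _ _ _ _).trans ?_
  simpa using zmodFourHom_ofAdd_intCast (hfour i) 1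

theorem isCyclicAmalgam_amalgamGenerator :
    IsCyclicAmalgam 2 2 (amalgamGenerator 0) (Fin.tail amalgamGenerator) where
  pow_mul_eq_one := amalgamGenerator_pow_four 0
  pow_eq_pow i := amalgamGenerator_sq_eq i.succ 0
  closure_eq_top := by
    rw [← closure_range_amalgamGenerator, ← Fin.range_cons, Fin.cons_self_tail]
  exists_lift x y hx hy := by
    have hsq (i : Fin 3) : (Fin.cons x y : Fin 3 → _) i ^ 2 = x ^ 2 := Fin.cases rfl hy i
    obtain ⟨θ, hθ⟩ := exists_amalgamGenerator_lift (Fin.cons x y)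
      (fun i => by rw [pow_mul _ 2 2, hsq, ← pow_mul, hx]) fun i j => by rw [hsq, hsq]
    exact ⟨θ, hθ 0, fun i => hθ i.succ⟩

end AmalgamThreeZFourAlongZTwo

/-- For `P` the amalgamated product of three copies of `ℤ/4` along `ℤ/2`, the
group homology `Hᵢ(P; ℤ)` is `ℤ/4 ⊕ ℤ/2 ⊕ ℤ/2` for odd `i > 0` and vanishes
for even `i > 0`; in particular the abelianization of `P` is
`ℤ/4 ⊕ ℤ/2 ⊕ ℤ/2`. -/
theorem homology_of_amalgam_three_ZFour_along_ZTwo (i : ℕ) (hi : 0 < i) :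
    (Odd i → Nonempty
      (barHomologySucc amalgamThreeZFourAlongZTwo (i - 1) ≃+
        (ZMod 4 × ZMod 2 × ZMod 2))) ∧
    (Even i → Subsingleton (barHomologySucc amalgamThreeZFourAlongZTwo (i - 1))) ∧
    Nonempty
      (Abelianization amalgamThreeZFourAlongZTwo ≃*
        Multiplicative (ZMod 4 × ZMod 2 × ZMod 2)) := by
  have e : ZMod 4 × (Fin 2 → ZMod 2) ≃+ ZMod 4 × ZMod 2 × ZMod 2 :=
    (AddEquiv.refl _).prodCongr (LinearEquiv.finTwoArrow ℤ (ZMod 2)).toAddEquiv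
  obtain ⟨hodd, heven, ⟨eAb⟩⟩ :=
    homology_of_amalgam_three_ZFour_along_ZTwo_general isCyclicAmalgam_amalgamGenerator i hi
  exact ⟨fun h => (hodd h).map fun eH => eH.trans e, heven,
    ⟨eAb.trans (AddEquiv.toMultiplicative e)⟩⟩
end

section
/- Let G be a finite nonabelian transitively commutative group with trivial center, let M_1, …, M_N be its maximal abelian subgroups, and let P be their free product (the coproduct in the category of groups). Then for every i > 0, the group cohomology H^i(P; ℤ) with trivial integer coefficients is isomorphic to ⊕_{p | |G|} ⊕_{Q ∈ Syl_p(G)} H^i(Q; ℤ), the direct sum over the primes p dividing |G| and over all Sylow p-subgroups Q of G of the group cohomology of Q with trivial integer coefficients. -/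
open scoped DirectSum

/-!
Restriction of the cohomology of a free product to its factors is an isomorphism in all positive
degrees: in degree one because a cocycle is an affine action, so that cocycles on the factors glue
uniquely, and in higher degrees by shifting dimensions with the representation of all functions on
the group. Restriction of the cohomology of a finite nilpotent group, with trivial coefficients, to
its Sylow subgroups is an isomorphism as well: a class that dies on a subgroup is killed by the
index, and the group retracts onto each Sylow subgroup.

In a transitively commutative group with trivial center the maximal abelian subgroups are the
centralizers of nontrivial elements and meet pairwise trivially. A nontrivial Sylow subgroup `Q`
has a central element `z ≠ 1`, so it lies in the centralizer of `z` and in no other maximal abelian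
subgroup. Hence the Sylow subgroups of `G` are those of its maximal abelian subgroups.
-/

open CategoryTheory Limits groupCohomology

universe u

section Restriction

variable {k G S : Type u} [CommRing k] [Group G] [Group S]

/-- The restriction map `Hⁿ(G, A) ⟶ Hⁿ(S, A)` along a homomorphism `φ : S →* G`. -/
noncomputable abbrev cohomologyRes (φ : S →* G) (A : Rep.{u} k G) (n : ℕ) :
    groupCohomology A n ⟶ groupCohomology (Rep.res φ A) n :=
  groupCohomology.map φ (𝟙 (Rep.res φ A)) n

/-- The joint restriction map `Hⁿ(G, A) → ∏ j, Hⁿ(S j, A)` along homomorphisms `f j : S j →* G`. -/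
noncomputable def cohomologyResPi {ι : Type*} {S : ι → Type u} [∀ j, Group (S j)]
    (f : ∀ j, S j →* G) (A : Rep.{u} k G) (n : ℕ) :
    groupCohomology A n →ₗ[k] ∀ j, groupCohomology (Rep.res (f j) A) n :=
  LinearMap.pi fun j => (cohomologyRes (f j) A n).hom

@[simp]
lemma cohomologyResPi_apply {ι : Type*} {S : ι → Type u} [∀ j, Group (S j)]
    (f : ∀ j, S j →* G) (A : Rep.{u} k G) (n : ℕ) (x : groupCohomology A n) (j : ι) :
    cohomologyResPi f A n x j = cohomologyRes (f j) A n x :=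
  rfl

lemma cocycles₁_mul {A : Rep.{u} k G} (f : cocycles₁ A) (g h : G) :
    f (g * h) = A.ρ g (f h) + f g :=
  (mem_cocycles₁_iff f.1).1 f.2 g h

lemma surjective_H1π (A : Rep.{u} k G) : Function.Surjective (H1π A) :=
  (ModuleCat.epi_iff_surjective (H1π A)).1 inferInstance

/-- The principal cocycle (principal crossed homomorphism) `g ↦ g • a - a`. -/
noncomputable def principalCocycle (A : Rep.{u} k G) (a : A) : cocycles₁ A :=
  ⟨fun g => A.ρ g a - a, coboundaries₁_le_cocycles₁ A ⟨a, rfl⟩⟩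

@[simp]
lemma principalCocycle_apply (A : Rep.{u} k G) (a : A) (g : G) :
    principalCocycle A a g = A.ρ g a - a :=
  rfl

lemma H1π_eq_zero_iff_exists {A : Rep.{u} k G} {f : cocycles₁ A} :
    H1π A f = 0 ↔ ∃ a, f = principalCocycle A a := by
  rw [H1π_eq_zero_iff]
  exact ⟨fun ⟨a, ha⟩ => ⟨a, Subtype.ext ha.symm⟩, fun ⟨a, ha⟩ => ⟨a, congrArg Subtype.val ha.symm⟩⟩

lemma cohomologyRes_H1π (φ : S →* G) (A : Rep.{u} k G) (f : cocycles₁ A) :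
    cohomologyRes φ A 1 (H1π A f) =
      H1π (Rep.res φ A) (mapCocycles₁ φ (𝟙 (Rep.res φ A)) f) :=
  congr($(H1π_comp_map φ (𝟙 (Rep.res φ A))) f)

lemma cohomologyRes_H1π_eq_zero_iff {φ : S →* G} {A : Rep.{u} k G} {f : cocycles₁ A} :
    cohomologyRes φ A 1 (H1π A f) = 0 ↔ ∃ a, ∀ s, f (φ s) = principalCocycle A a (φ s) := by
  rw [cohomologyRes_H1π, H1π_eq_zero_iff_exists]
  exact exists_congr fun a => ⟨fun h s => DFunLike.congr_fun h s, fun h => cocycles₁_ext h⟩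

/-- The restriction along `φ : S →* G` of the cochains of a short complex of
`G`-representations. -/
noncomputable def cochainsRes (φ : S →* G) (X : ShortComplex (Rep.{u} k G)) :
    X.map (cochainsFunctor k G) ⟶ (X.map (Rep.resFunctor φ)).map (cochainsFunctor k S) where
  τ₁ := cochainsMap φ (𝟙 (Rep.res φ X.X₁))
  τ₂ := cochainsMap φ (𝟙 (Rep.res φ X.X₂))
  τ₃ := cochainsMap φ (𝟙 (Rep.res φ X.X₃))
  comm₁₂ := rfl
  comm₂₃ := rfl

lemma δ_comp_cohomologyRes (φ : S →* G) {X : ShortComplex (Rep.{u} k G)} (hX : X.ShortExact)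
    (n : ℕ) :
    δ hX n (n + 1) rfl ≫ cohomologyRes φ X.X₁ (n + 1) =
      cohomologyRes φ X.X₃ n ≫ δ ((Rep.shortExact_res φ).2 hX) n (n + 1) rfl :=
  HomologicalComplex.HomologySequence.δ_naturality (cochainsRes φ X)
    (map_cochainsFunctor_shortExact hX)
    (map_cochainsFunctor_shortExact ((Rep.shortExact_res φ).2 hX)) n (n + 1) rfl

end Restriction

section DimensionShifting

variable {k G H : Type u} [CommRing k] [Group G] [Group H]

lemma isZero_groupCohomology_of_retract {A B : Rep.{u} k G} (h : Retract A B) {n : ℕ}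
    (hB : IsZero (groupCohomology B n)) : IsZero (groupCohomology A n) := by
  let F := groupCohomology.functor k G n
  have hA : IsZero (F.obj A) := IsZero.of_mono (h.map F).i hB
  exact hA

/-- The representation `Fun(G, A)` of `G`, coinduced from the trivial subgroup: its elements are
functions on `G` and its cohomology vanishes in positive degrees. -/
noncomputable abbrev funRep (A : Rep.{u} k G) : Rep.{u} k G :=
  Rep.coind (⊥ : Subgroup G).subtype (Rep.res (⊥ : Subgroup G).subtype A)

/-- The embedding `A ⟶ Fun(G, A)` that sends `a` to `g ↦ g • a`. -/
noncomputable abbrev toFunRep (A : Rep.{u} k G) : A ⟶ funRep A :=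
  Rep.resCoindToHom (⊥ : Subgroup G).subtype A (Rep.res (⊥ : Subgroup G).subtype A) (𝟙 _)

lemma mem_coindV_bot (A : Rep.{u} k G) (f : G → A) :
    f ∈ Representation.coindV (⊥ : Subgroup G).subtype
      (Rep.res (⊥ : Subgroup G).subtype A).ρ := by
  rintro ⟨g, hg⟩ x
  obtain rfl : g = 1 := hg
  simp

lemma isZero_groupCohomology_funRep (A : Rep.{u} k G) (n : ℕ) :
    IsZero (groupCohomology (funRep A) (n + 1)) :=
  (isZero_groupCohomology_succ_of_subsingleton _ n).of_iso (coindIso _ (n + 1))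

instance mono_toFunRep (A : Rep.{u} k G) : Mono (toFunRep A) := by
  rw [Rep.mono_iff_injective]
  intro a b h
  have hone : A.ρ 1 a = A.ρ 1 b := congrFun (congrArg Subtype.val h) 1
  simpa using hone

lemma exists_right_equivariant {φ : H →* G} (hφ : Function.Injective φ) :
    ∃ t : G → H, ∀ x h, t (x * φ h) = t x * h := by
  obtain ⟨T, hT, -⟩ := φ.range.exists_isComplement_left 1
  let e := MonoidHom.ofInjective hφ
  refine ⟨fun x => e.symm (hT.equiv x).2, fun x h => e.injective ?_⟩
  have hmul := congrArg Prod.snd (hT.equiv_mul_right x (e h))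
  rw [map_mul, e.apply_symm_apply, e.apply_symm_apply]
  exact hmul

/-- A map `t : G → H` with `t (x * φ h) = t x * h` splits `toFunRep` over `H`: the retraction sends
`F : H → Fun(G, A)` to `x ↦ F (t x) (x * (φ (t x))⁻¹)`. -/
lemma nonempty_retract_res_funRep {φ : H →* G} (hφ : Function.Injective φ) (A : Rep.{u} k G) :
    Nonempty (Retract (Rep.res φ (funRep A)) (funRep (Rep.res φ (funRep A)))) := by
  obtain ⟨t, ht⟩ := exists_right_equivariant hφ
  let r : funRep (Rep.res φ (funRep A)) →ₗ[k] Rep.res φ (funRep A) :=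
    { toFun := fun F => ⟨fun x => (F.1 (t x)).1 (x * (φ (t x))⁻¹), mem_coindV_bot A _⟩
      map_add' := fun F F' => by ext; rfl
      map_smul' := fun c F => by ext; rfl }
  refine ⟨⟨toFunRep _, Rep.ofHom ⟨r, fun h => ?_⟩, ?_⟩⟩
  · ext F x
    change (F.1 (t x * h)).1 (x * (φ (t x))⁻¹) =
      (F.1 (t (x * φ h))).1 (x * φ h * (φ (t (x * φ h)))⁻¹)
    rw [ht]
    simp [mul_assoc]
  · ext F x
    change F.1 (x * (φ (t x))⁻¹ * φ (t x)) = F.1 x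
    simp

lemma isZero_groupCohomology_res_funRep {φ : H →* G} (hφ : Function.Injective φ)
    (A : Rep.{u} k G) (n : ℕ) : IsZero (groupCohomology (Rep.res φ (funRep A)) (n + 1)) :=
  isZero_groupCohomology_of_retract (nonempty_retract_res_funRep hφ A).some
    (isZero_groupCohomology_funRep _ n)

/-- The dimension shift of `A`: the quotient of `Fun(G, A)` by `A`, whose cohomology in each
positive degree is that of `A` one degree higher. -/
noncomputable abbrev dimShift (A : Rep.{u} k G) : Rep.{u} k G :=
  cokernel (toFunRep A)

lemma shortExact_dimShift (A : Rep.{u} k G) :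
    (ShortComplex.mk (toFunRep A) (cokernel.π (toFunRep A)) (cokernel.condition _)).ShortExact where
  exact := ShortComplex.exact_cokernel _
  mono_f := mono_toFunRep A
  epi_g := coequalizer.π_epi

/-- The connecting isomorphism `Hⁿ⁺¹(H, dimShift A) ≅ Hⁿ⁺²(H, A)`. The shift is taken over `G`, so
that one and the same module serves all the groups that embed into `G`. -/
noncomputable def dimShiftIso {φ : H →* G} (hφ : Function.Injective φ) (A : Rep.{u} k G) (n : ℕ) :
    groupCohomology (Rep.res φ (dimShift A)) (n + 1) ≅ groupCohomology (Rep.res φ A) (n + 2) :=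
  @asIso _ _ _ _ (δ ((Rep.shortExact_res φ).2 (shortExact_dimShift A)) (n + 1) (n + 2) rfl)
    (isIso_δ_of_isZero _ (n + 1) (isZero_groupCohomology_res_funRep hφ A n)
      (isZero_groupCohomology_res_funRep hφ A (n + 1)))

lemma cohomologyRes_dimShiftIso {φ : H →* G} (hφ : Function.Injective φ) (A : Rep.{u} k G) (n : ℕ)
    (x : groupCohomology (dimShift A) (n + 1)) :
    cohomologyRes φ A (n + 2)
        ((dimShiftIso (φ := MonoidHom.id G) Function.injective_id A n).hom x) =
      (dimShiftIso hφ A n).hom (cohomologyRes φ (dimShift A) (n + 1) x) :=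
  congr($(δ_comp_cohomologyRes φ (shortExact_dimShift A) (n + 1)) x)

lemma bijective_cohomologyResPi_succ {ι : Type*} {S : ι → Type u} [∀ j, Group (S j)]
    {f : ∀ j, S j →* G} (hf : ∀ j, Function.Injective (f j)) {A : Rep.{u} k G} {n : ℕ}
    (h : Function.Bijective (cohomologyResPi f (dimShift A) (n + 1))) :
    Function.Bijective (cohomologyResPi f A (n + 2)) := by
  let e := (dimShiftIso (φ := MonoidHom.id G) Function.injective_id A n).toLinearEquiv
  let e' := LinearEquiv.piCongrRight fun j => (dimShiftIso (hf j) A n).toLinearEquiv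
  have hcomm : cohomologyResPi f A (n + 2) ∘ e = e' ∘ cohomologyResPi f (dimShift A) (n + 1) :=
    funext fun x => funext fun j => cohomologyRes_dimShiftIso (hf j) A n x
  rw [← e.bijective.of_comp_iff, hcomm]
  exact e'.bijective.comp h

end DimensionShifting

section Transfer

variable {k G S : Type u} [CommRing k] [Group G] [Group S]

lemma exists_H1π_eq_of_cohomologyRes_eq_zero {φ : S →* G} {A : Rep.{u} k G}
    {x : groupCohomology A 1} (hx : cohomologyRes φ A 1 x = 0) :
    ∃ f : cocycles₁ A, H1π A f = x ∧ ∀ s, f (φ s) = 0 := by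
  obtain ⟨f, rfl⟩ := surjective_H1π A x
  obtain ⟨a, ha⟩ := cohomologyRes_H1π_eq_zero_iff.1 hx
  refine ⟨f - principalCocycle A a, ?_, fun s => sub_eq_zero.2 (ha s)⟩
  rw [map_sub, H1π_eq_zero_iff_exists.2 ⟨a, rfl⟩, sub_zero]

/-- A cocycle that vanishes on `H` descends to `G ⧸ H`, and the sum of its values there cobounds
its multiple by the index. -/
lemma index_nsmul_H1π_eq_zero {H : Subgroup G} [H.FiniteIndex] {A : Rep.{u} k G}
    {f : cocycles₁ A} (hf : ∀ h ∈ H, f h = 0) : H.index • H1π A f = 0 := by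
  have hright (g : G) {h : G} (hh : h ∈ H) : f (g * h) = f g := by
    rw [cocycles₁_mul, hf h hh, map_zero, zero_add]
  let q : G ⧸ H → A := Quotient.lift f fun x y hxy => by
    simpa using (hright x (QuotientGroup.leftRel_apply.1 hxy)).symm
  have hq (g : G) (c : G ⧸ H) : q (g • c) = A.ρ g (q c) + f g := by
    induction c using QuotientGroup.induction_on with
    | H z => exact cocycles₁_mul f g z
  have := Fintype.ofFinite (G ⧸ H)
  have hsum (g : G) : ∑ c, q c = A.ρ g (∑ c, q c) + H.index • f g :=
    calc ∑ c, q c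
      _ = ∑ c, q (g • c) := (Equiv.sum_comp (MulAction.toPerm g) q).symm
      _ = A.ρ g (∑ c, q c) + H.index • f g := by
        simp only [hq, Finset.sum_add_distrib, map_sum, Finset.sum_const, Finset.card_univ,
          Subgroup.index, Nat.card_eq_fintype_card]
  rw [← map_nsmul]
  refine H1π_eq_zero_iff_exists.2 ⟨-∑ c, q c, cocycles₁_ext fun g => ?_⟩
  rw [principalCocycle_apply, map_neg, neg_sub_neg, eq_sub_iff_add_eq']
  exact (hsum g).symm

theorem index_nsmul_eq_zero_of_cohomologyRes_eq_zero {φ : S →* G} (hφ : Function.Injective φ)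
    [φ.range.FiniteIndex] {A : Rep.{u} k G} {n : ℕ} {x : groupCohomology A (n + 1)}
    (hx : cohomologyRes φ A (n + 1) x = 0) : φ.range.index • x = 0 := by
  induction n generalizing A with
  | zero =>
    obtain ⟨f, rfl, hf⟩ := exists_H1π_eq_of_cohomologyRes_eq_zero hx
    exact index_nsmul_H1π_eq_zero (Set.forall_mem_range.2 hf)
  | succ n ih =>
    let e := (dimShiftIso (φ := MonoidHom.id G) Function.injective_id A n).toLinearEquiv
    let e' := (dimShiftIso hφ A n).toLinearEquiv
    obtain ⟨y, rfl⟩ := e.surjective x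
    have hy : e' (cohomologyRes φ (dimShift A) (n + 1) y) = 0 :=
      (cohomologyRes_dimShiftIso hφ A n y).symm.trans hx
    rw [← map_nsmul, ih (e'.map_eq_zero_iff.1 hy), map_zero]

lemma card_nsmul_groupCohomology_succ [Finite G] (A : Rep.{u} k G) {n : ℕ}
    (x : groupCohomology A (n + 1)) : Nat.card G • x = 0 := by
  let φ := (⊥ : Subgroup G).subtype
  have := ModuleCat.subsingleton_of_isZero
    (isZero_groupCohomology_succ_of_subsingleton (Rep.res φ A) n)
  rw [← Subgroup.index_bot, ← (⊥ : Subgroup G).range_subtype]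
  exact index_nsmul_eq_zero_of_cohomologyRes_eq_zero (φ := φ) (Subgroup.subtype_injective _)
    (Subsingleton.elim _ _)

theorem injective_cohomologyResPi_of_not_dvd_index [Finite G] {K : Type*} {S : K → Type u}
    [∀ x, Group (S x)] {f : ∀ x, S x →* G} (hf : ∀ x, Function.Injective (f x))
    (hindex : ∀ p : ℕ, p.Prime → p ∣ Nat.card G → ∃ x, ¬ p ∣ (f x).range.index)
    (A : Rep.{u} k G) (n : ℕ) : Function.Injective (cohomologyResPi f A (n + 1)) := by
  rw [injective_iff_map_eq_zero]
  intro c hc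
  by_contra hne
  obtain ⟨p, hp, hpc⟩ := Nat.exists_prime_and_dvd (mt AddMonoid.addOrderOf_eq_one_iff.1 hne)
  obtain ⟨x, hx⟩ := hindex p hp <|
    hpc.trans (addOrderOf_dvd_of_nsmul_eq_zero (card_nsmul_groupCohomology_succ A c))
  have hxc := index_nsmul_eq_zero_of_cohomologyRes_eq_zero (hf x) (congrFun hc x)
  exact hx (hpc.trans (addOrderOf_dvd_of_nsmul_eq_zero hxc))

end Transfer

section FreeProduct

variable {k ι : Type u} [CommRing k] {S : ι → Type u} [∀ j, Group (S j)]

lemma cocycles₁_coprodI_ext {A : Rep.{u} k (Monoid.CoprodI S)} {f f' : cocycles₁ A}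
    (h : ∀ j (s : S j), f (Monoid.CoprodI.of s) = f' (Monoid.CoprodI.of s)) : f = f' := by
  refine cocycles₁_ext fun g => ?_
  induction g using Monoid.CoprodI.induction_on with
  | one => rw [cocycles₁_map_one, cocycles₁_map_one]
  | of j s => exact h j s
  | mul x y hx hy => rw [cocycles₁_mul, cocycles₁_mul, hx, hy]

/-- The affine action `g ↦ (a ↦ g • a + f g)` on `A` defined by a cocycle `f`. -/
noncomputable def affineAction {G : Type u} [Group G] {A : Rep.{u} k G} (f : cocycles₁ A) :
    G →* Function.End A where
  toFun g a := A.ρ g a + f g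
  map_one' := funext fun a => by
    rw [map_one, cocycles₁_map_one, add_zero]
    rfl
  map_mul' g h := funext fun a => by
    change A.ρ (g * h) a + f (g * h) = A.ρ g (A.ρ h a + f h) + f g
    rw [cocycles₁_mul, map_mul, map_add, add_assoc]
    rfl

lemma exists_cocycles₁_coprodI (A : Rep.{u} k (Monoid.CoprodI S))
    (f : ∀ j, cocycles₁ (Rep.res (Monoid.CoprodI.of (i := j)) A)) :
    ∃ F : cocycles₁ A, ∀ j (s : S j), F (Monoid.CoprodI.of s) = f j s := by
  let Φ : Monoid.CoprodI S →* Function.End A := Monoid.CoprodI.lift fun j => affineAction (f j)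
  have hof (j) (s : S j) (a : A) :
      Φ (Monoid.CoprodI.of s) a = A.ρ (Monoid.CoprodI.of s) a + f j s := by
    simp only [Φ, Monoid.CoprodI.lift_of]
    rfl
  have hmul (g h : Monoid.CoprodI S) (a : A) : Φ (g * h) a = Φ g (Φ h a) := by rw [map_mul]; rfl
  have haffine (g : Monoid.CoprodI S) (a : A) : Φ g a = A.ρ g a + Φ g 0 := by
    induction g using Monoid.CoprodI.induction_on generalizing a with
    | one => simp only [map_one, Function.End.one_def, id_eq, add_zero, Module.End.one_apply]
    | of j s => rw [hof, hof, map_zero, zero_add]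
    | mul g h hg hh =>
      rw [hmul, hmul, hh a, hg, hg (Φ h 0), map_mul, map_add, add_assoc]
      rfl
  refine ⟨⟨fun g => Φ g 0, (mem_cocycles₁_iff _).2 fun g h => ?_⟩, fun j s => ?_⟩
  · rw [hmul, haffine]
  · change Φ (Monoid.CoprodI.of s) 0 = f j s
    rw [hof, map_zero, zero_add]

lemma surjective_cohomologyResPi_coprodI_one (A : Rep.{u} k (Monoid.CoprodI S)) :
    Function.Surjective (cohomologyResPi (fun j => Monoid.CoprodI.of (M := S) (i := j)) A 1) := by
  intro y
  choose f hf using fun j => surjective_H1π _ (y j)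
  obtain ⟨F, hF⟩ := exists_cocycles₁_coprodI A f
  refine ⟨H1π A F, funext fun j => ?_⟩
  rw [cohomologyResPi_apply, cohomologyRes_H1π, ← hf j]
  exact congrArg _ (cocycles₁_ext (hF j))

lemma injective_cohomologyResPi_coprodI_one_of_epi {I B : Rep.{u} k (Monoid.CoprodI S)}
    (π : I ⟶ B) [Epi π] (hI : IsZero (groupCohomology I 1)) :
    Function.Injective (cohomologyResPi (fun j => Monoid.CoprodI.of (M := S) (i := j)) B 1) := by
  have hπ := (Rep.epi_iff_surjective π).1 inferInstance
  have := ModuleCat.subsingleton_of_isZero hI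
  rw [injective_iff_map_eq_zero]
  intro x hx
  obtain ⟨f, rfl⟩ := surjective_H1π B x
  choose b hb using fun j => cohomologyRes_H1π_eq_zero_iff.1 (congrFun hx j)
  choose a ha using fun j => hπ (b j)
  obtain ⟨F, hF⟩ := exists_cocycles₁_coprodI I fun j => principalCocycle _ (a j)
  obtain ⟨c, rfl⟩ := H1π_eq_zero_iff_exists.1 (Subsingleton.elim (H1π I F) 0)
  have hmap (g) (v : I) : π.hom (principalCocycle I v g) = principalCocycle B (π.hom v) g := by
    rw [principalCocycle_apply, principalCocycle_apply, map_sub, Rep.hom_comm_apply]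
  refine H1π_eq_zero_iff_exists.2 ⟨π.hom c, cocycles₁_coprodI_ext fun j s => ?_⟩
  calc f (Monoid.CoprodI.of s)
    _ = principalCocycle B (π.hom (a j)) (Monoid.CoprodI.of s) := by rw [ha, hb]
    _ = π.hom (principalCocycle I (a j) (Monoid.CoprodI.of s)) := (hmap _ _).symm
    _ = π.hom (principalCocycle I c (Monoid.CoprodI.of s)) := congrArg π.hom (hF j s).symm
    _ = principalCocycle B (π.hom c) (Monoid.CoprodI.of s) := hmap _ _

lemma injective_cohomologyResPi_coprodI_one_of_isTrivial (A : Rep.{u} k (Monoid.CoprodI S))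
    [A.ρ.IsTrivial] :
    Function.Injective (cohomologyResPi (fun j => Monoid.CoprodI.of (M := S) (i := j)) A 1) := by
  rw [injective_iff_map_eq_zero]
  intro x hx
  obtain ⟨f, rfl⟩ := surjective_H1π A x
  choose a ha using fun j => cohomologyRes_H1π_eq_zero_iff.1 (congrFun hx j)
  have hf : f = 0 := cocycles₁_coprodI_ext fun j s => by
    rw [ha, principalCocycle_apply, Representation.isTrivial_apply, sub_self]
    rfl
  rw [hf, map_zero]

theorem bijective_cohomologyResPi_coprodI {A : Rep.{u} k (Monoid.CoprodI S)}
    (hA : Function.Injective (cohomologyResPi (fun j => Monoid.CoprodI.of (M := S) (i := j)) A 1))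
    (n : ℕ) :
    Function.Bijective
      (cohomologyResPi (fun j => Monoid.CoprodI.of (M := S) (i := j)) A (n + 1)) := by
  induction n generalizing A with
  | zero => exact ⟨hA, surjective_cohomologyResPi_coprodI_one A⟩
  | succ n ih =>
    exact bijective_cohomologyResPi_succ Monoid.CoprodI.of_injective <| ih <|
      injective_cohomologyResPi_coprodI_one_of_epi (cokernel.π (toFunRep A))
        (isZero_groupCohomology_funRep A 0)

end FreeProduct

section TrivialCoefficients

variable {k V G S : Type u} [CommRing k] [AddCommGroup V] [Module k V] [Group G] [Group S]

variable (k V) in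
/-- The restriction map with trivial coefficients, `cohomologyRes φ (Rep.trivial k G V) n` with the
restricted module written as `Rep.trivial k S V`. -/
noncomputable abbrev trivialRes (φ : S →* G) (n : ℕ) :
    groupCohomology (Rep.trivial k G V) n ⟶ groupCohomology (Rep.trivial k S V) n :=
  groupCohomology.map φ (𝟙 (Rep.trivial k S V)) n

lemma trivialRes_comp {R : Type u} [Group R] (φ : S →* G) (ψ : R →* S) (n : ℕ) :
    trivialRes k V (φ.comp ψ) n = trivialRes k V φ n ≫ trivialRes k V ψ n :=
  groupCohomology.map_comp (A := Rep.trivial k G V) (B := Rep.trivial k S V)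
    (C := Rep.trivial k R V) φ ψ (𝟙 (Rep.trivial k S V)) (𝟙 (Rep.trivial k R V)) n

lemma trivialRes_id (n : ℕ) : trivialRes k V (MonoidHom.id G) n = 𝟙 _ :=
  groupCohomology.map_id _

lemma trivialRes_one (n : ℕ) : trivialRes k V (1 : S →* G) (n + 1) = 0 := by
  have hfactor : (1 : S →* G) = (1 : PUnit.{u + 1} →* G).comp 1 := rfl
  have hzero : trivialRes k V (1 : PUnit.{u + 1} →* G) (n + 1) = 0 :=
    (isZero_groupCohomology_succ_of_subsingleton _ n).eq_zero_of_tgt _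
  rw [hfactor, trivialRes_comp, hzero, zero_comp]

lemma surjective_cohomologyResPi_of_retractions {K : Type*} [Finite K] {S : K → Type u}
    [∀ x, Group (S x)] {f : ∀ x, S x →* G} {e : ∀ x, G →* S x}
    (hself : ∀ x, (e x).comp (f x) = MonoidHom.id (S x))
    (hne : ∀ x y, x ≠ y → (e x).comp (f y) = 1) (n : ℕ) :
    Function.Surjective (cohomologyResPi f (Rep.trivial k G V) (n + 1)) := by
  have := Fintype.ofFinite K
  intro c
  have hcomp (x y : K) : trivialRes k V (f y) (n + 1) (trivialRes k V (e x) (n + 1) (c x)) =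
      trivialRes k V ((e x).comp (f y)) (n + 1) (c x) :=
    congr($(trivialRes_comp (e x) (f y) (n + 1)) (c x)).symm
  refine ⟨∑ x, trivialRes k V (e x) (n + 1) (c x), funext fun y => ?_⟩
  change trivialRes k V (f y) (n + 1) _ = c y
  rw [map_sum, Fintype.sum_eq_single y fun x hx => ?_]
  · rw [hcomp, hself, trivialRes_id]
    rfl
  · rw [hcomp, hne x y hx, trivialRes_one]
    rfl

end TrivialCoefficients

section Nilpotent

lemma monoidHom_eq_one_of_isPGroup {p q : ℕ} [Fact p.Prime] [Fact q.Prime] (hpq : p ≠ q)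
    {S T : Type*} [Group S] [Group T] (hS : IsPGroup p S) (hT : IsPGroup q T) (f : S →* T) :
    f = 1 := by
  rw [← MonoidHom.range_eq_bot_iff, ← disjoint_self]
  exact IsPGroup.disjoint_of_ne p q hpq _ _ (hS.of_surjective _ f.rangeRestrict_surjective)
    (hT.to_subgroup _)

lemma exists_comp_eq_id_of_coprime_index {G S : Type*} [Group G] [Finite G] [Group S]
    {f : S →* G} (hf : Function.Injective f) (hcop : (Nat.card S).Coprime f.range.index)
    {π : G →* S} (hπ : Function.Surjective π) : ∃ e : G →* S, e.comp f = MonoidHom.id S := by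
  have := Finite.of_surjective π hπ
  have hcard : Nat.card f.range = Nat.card S := (Nat.card_congr (f.ofInjective hf).toEquiv).symm
  have hker : Nat.card π.ker = f.range.index := by
    have hindex : π.ker.index = Nat.card S := by
      rw [Subgroup.index_ker, π.range_eq_top.2 hπ, Subgroup.card_top]
    have hmul := π.ker.card_mul_index.trans f.range.card_mul_index.symm
    rw [hindex, hcard, mul_comm] at hmul
    exact Nat.eq_of_mul_eq_mul_left Nat.card_pos hmul
  have hdisj : Disjoint f.range π.ker :=
    Subgroup.disjoint_of_coprime_natCard (by rwa [hcard, hker])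
  have hinj : Function.Injective (π.comp f) := by
    rw [injective_iff_map_eq_one]
    intro s hs
    have hfs : f s = 1 := Subgroup.disjoint_def.1 hdisj (f.mem_range.2 ⟨s, rfl⟩) hs
    exact (map_eq_one_iff f hf).1 hfs
  let E := MulEquiv.ofBijective (π.comp f) (Finite.injective_iff_bijective.1 hinj)
  exact ⟨E.symm.toMonoidHom.comp π, MonoidHom.ext E.symm_apply_apply⟩

variable {G : Type*} [Group G] [Finite G] [Group.IsNilpotent G]

lemma exists_surjective_sylow_of_isNilpotent {p : ℕ} [Fact p.Prime] (P : Sylow p G) :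
    ∃ π : G →* P, Function.Surjective π := by
  by_cases hp : p ∣ Nat.card G
  · let E := Sylow.directProductOfNormal (G := G) inferInstance
    have hp' : p ∈ (Nat.card G).primeFactors :=
      Nat.mem_primeFactors.2 ⟨Fact.out, hp, Nat.card_pos.ne'⟩
    let π₁ := Pi.evalMonoidHom (fun q : (Nat.card G).primeFactors => ∀ Q : Sylow q G, Q) ⟨p, hp'⟩
    let π₂ := Pi.evalMonoidHom (fun Q : Sylow p G => Q) P
    have hπ₁ : Function.Surjective π₁ := Function.surjective_eval _
    have hπ₂ : Function.Surjective π₂ := Function.surjective_eval _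
    exact ⟨(π₂.comp π₁).comp E.symm.toMonoidHom, (hπ₂.comp hπ₁).comp E.symm.surjective⟩
  · have hcard : Nat.card P = 1 := by
      rw [P.card_eq_multiplicity, Nat.factorization_eq_zero_of_not_dvd hp, pow_zero]
    have := (Nat.card_eq_one_iff_unique.1 hcard).1
    exact ⟨1, fun x => ⟨1, Subsingleton.elim _ _⟩⟩

lemma exists_retraction_of_isNilpotent {p : ℕ} [Fact p.Prime] {S : Type*} [Group S]
    (hS : IsPGroup p S) {f : S →* G} (hf : Function.Injective f) (hindex : ¬ p ∣ f.range.index) :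
    ∃ e : G →* S, e.comp f = MonoidHom.id S := by
  let E := f.ofInjective hf
  let P := (hS.of_equiv E).toSylow hindex
  obtain ⟨π, hπ⟩ := exists_surjective_sylow_of_isNilpotent P
  refine exists_comp_eq_id_of_coprime_index hf ?_
    (π := E.symm.toMonoidHom.comp π) (E.symm.surjective.comp hπ)
  rw [Nat.card_congr E.toEquiv]
  exact P.card_coprime_index

end Nilpotent

theorem bijective_cohomologyResPi_of_isNilpotent {k V G : Type u} [CommRing k] [AddCommGroup V]
    [Module k V] [Group G] [Finite G] [Group.IsNilpotent G] {K : Type*} [Finite K] {p : K → ℕ}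
    [∀ x, Fact (p x).Prime] (hp : Function.Injective p)
    (hp' : ∀ q : ℕ, q.Prime → q ∣ Nat.card G → ∃ x, p x = q)
    {S : K → Type u} [∀ x, Group (S x)] (hS : ∀ x, IsPGroup (p x) (S x)) {f : ∀ x, S x →* G}
    (hf : ∀ x, Function.Injective (f x)) (hindex : ∀ x, ¬ p x ∣ (f x).range.index) (n : ℕ) :
    Function.Bijective (cohomologyResPi f (Rep.trivial k G V) (n + 1)) := by
  choose e he using fun x => exists_retraction_of_isNilpotent (hS x) (hf x) (hindex x)
  refine ⟨injective_cohomologyResPi_of_not_dvd_index hf (fun q hq hqG => ?_) _ n,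
    surjective_cohomologyResPi_of_retractions he (fun x y hxy => ?_) n⟩
  · obtain ⟨x, rfl⟩ := hp' q hq hqG
    exact ⟨x, hindex x⟩
  · exact monoidHom_eq_one_of_isPGroup (hp.ne hxy.symm) (hS y) (hS x) _

section SylowSubgroups

variable {G : Type u} [Group G]

lemma not_dvd_index_range_inclusion_sylow [Finite G] {p : ℕ} [Fact p.Prime] {P : Sylow p G}
    {H : Subgroup G} (hP : P ≤ H) : ¬ p ∣ (Subgroup.inclusion hP).range.index := by
  rw [Subgroup.inclusion_range]
  exact fun h => P.not_dvd_index (h.trans (Subgroup.relIndex_dvd_index_of_le hP))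

lemma sylow_eq_of_le_of_isNilpotent [Finite G] {p : ℕ} [Fact p.Prime] {P Q : Sylow p G}
    {H : Subgroup G} [Group.IsNilpotent H] (hP : P ≤ H) (hQ : Q ≤ H) : P = Q :=
  have := Sylow.unique_of_normal (P.subtype hP) inferInstance
  Sylow.subtype_injective (Subsingleton.elim (P.subtype hP) (Q.subtype hQ))

lemma exists_sylow_not_disjoint [Finite G] {p : ℕ} [Fact p.Prime] {H : Subgroup G}
    (hp : p ∣ Nat.card H) : ∃ P : Sylow p G, ¬ Disjoint (P : Subgroup G) H := by
  obtain ⟨z, hz⟩ := exists_prime_orderOf_dvd_card' p hp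
  have hzG : orderOf (z : G) = p := by rw [Subgroup.orderOf_coe, hz]
  have hpow : IsPGroup p (Subgroup.zpowers (z : G)) :=
    IsPGroup.of_card (n := 1) (by rw [Nat.card_zpowers, hzG, pow_one])
  obtain ⟨P, hP⟩ := hpow.exists_le_sylow
  refine ⟨P, fun h => (Fact.out : p.Prime).ne_one ?_⟩
  rw [← hzG, orderOf_eq_one_iff]
  exact Subgroup.disjoint_def.1 h (hP (Subgroup.mem_zpowers _)) z.2

variable [Fintype G]

variable (G) in
/-- The Sylow subgroups of `G` at the primes dividing `|G|`, which index the direct sum. -/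
abbrev PrimeSylow : Type u :=
  Σ p : {p : ℕ // p.Prime ∧ p ∣ Fintype.card G}, Sylow p.1 G

lemma PrimeSylow.fact_prime (x : PrimeSylow G) : Fact x.1.1.Prime :=
  ⟨x.1.2.1⟩

instance : Finite (PrimeSylow G) := by
  have : Finite {p : ℕ // p.Prime ∧ p ∣ Fintype.card G} :=
    (Nat.divisors (Fintype.card G)).finite_toSet.subset
      (fun p hp => Nat.mem_divisors.2 ⟨hp.2, Fintype.card_ne_zero⟩)
  infer_instance

lemma PrimeSylow.ne_bot (x : PrimeSylow G) : (x.2 : Subgroup G) ≠ ⊥ :=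
  have := x.fact_prime
  x.2.ne_bot_of_dvd_card (by rw [Nat.card_eq_fintype_card]; exact x.1.2.2)

theorem bijective_cohomologyResPi_primeSylow {k V : Type u} [CommRing k] [AddCommGroup V]
    [Module k V] {H : Subgroup G} [Group.IsNilpotent H]
    (hH : ∀ x : PrimeSylow G, ¬ Disjoint (x.2 : Subgroup G) H → x.2 ≤ H) (n : ℕ) :
    Function.Bijective (cohomologyResPi
      (fun x : {x : PrimeSylow G // x.2 ≤ H} => Subgroup.inclusion x.2)
      (Rep.trivial k H V) (n + 1)) := by
  have (x : {x : PrimeSylow G // x.2 ≤ H}) : Fact (x.1.1 : ℕ).Prime := x.1.fact_prime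
  refine bijective_cohomologyResPi_of_isNilpotent (V := V)
    (S := fun x : {x : PrimeSylow G // x.2 ≤ H} => (x.1.2 : Subgroup G))
    (f := fun x => Subgroup.inclusion x.2) (p := fun x => x.1.1) ?_ ?_
    (fun x => x.1.2.isPGroup') (fun x => Subgroup.inclusion_injective x.2)
    (fun x => not_dvd_index_range_inclusion_sylow x.2) n
  · rintro ⟨⟨p, P⟩, hP⟩ ⟨⟨q, Q⟩, hQ⟩ hpq
    obtain rfl : p = q := Subtype.ext hpq
    have : Fact p.1.Prime := ⟨p.2.1⟩
    obtain rfl : P = Q := sylow_eq_of_le_of_isNilpotent hP hQ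
    rfl
  · intro q hq hqH
    have : Fact q.Prime := ⟨hq⟩
    obtain ⟨Q, hQ⟩ := exists_sylow_not_disjoint hqH
    have hqG : q ∣ Fintype.card G := by
      rw [← Nat.card_eq_fintype_card]
      exact hqH.trans H.card_subgroup_dvd_card
    exact ⟨⟨⟨⟨q, hq, hqG⟩, Q⟩, hH _ hQ⟩, rfl⟩

end SylowSubgroups

theorem nonempty_groupCohomology_coprodI_linearEquiv_directSum_primeSylow
    {k V G ι : Type u} [CommRing k] [AddCommGroup V] [Module k V] [Group G] [Fintype G]
    (M : ι → Subgroup G) [∀ j, Group.IsNilpotent (M j)]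
    (hdisj : Pairwise fun i j => Disjoint (M i) (M j))
    (hSylow : ∀ x : PrimeSylow G, ∃ j, x.2 ≤ M j) {i : ℕ} (hi : 0 < i) :
    Nonempty (groupCohomology (Rep.trivial k (Monoid.CoprodI fun j => M j) V) i ≃ₗ[k]
      ⨁ x : PrimeSylow G, groupCohomology (Rep.trivial k (x.2 : Subgroup G) V) i) := by
  classical
  obtain ⟨n, rfl⟩ := Nat.exists_eq_add_of_lt hi
  rw [zero_add]
  have heq {j l : ι} {x : PrimeSylow G} (hl : x.2 ≤ M l)
      (hj : ¬ Disjoint (x.2 : Subgroup G) (M j)) : l = j :=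
    by_contra fun hlj => hj ((hdisj hlj).mono_left hl)
  have hle (j : ι) (x : PrimeSylow G) (hj : ¬ Disjoint (x.2 : Subgroup G) (M j)) : x.2 ≤ M j := by
    obtain ⟨l, hl⟩ := hSylow x
    exact heq hl hj ▸ hl
  let E : (Σ j, {x : PrimeSylow G // x.2 ≤ M j}) ≃ PrimeSylow G :=
    Equiv.ofBijective (fun y => y.2.1) (by
      refine ⟨?_, fun x => (hSylow x).elim fun j hj => ⟨⟨j, x, hj⟩, rfl⟩⟩
      rintro ⟨j, x, hj⟩ ⟨l, _, hl⟩ rfl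
      obtain rfl := heq hj fun h => x.ne_bot (h.eq_bot_of_le hl)
      rfl)
  have := Fintype.ofFinite (PrimeSylow G)
  let e₁ := LinearEquiv.ofBijective _ (bijective_cohomologyResPi_coprodI
    (injective_cohomologyResPi_coprodI_one_of_isTrivial
      (Rep.trivial k (Monoid.CoprodI fun j => M j) V)) n)
  let e₂ (j : ι) := LinearEquiv.ofBijective _
    (bijective_cohomologyResPi_primeSylow (k := k) (V := V) (hle j) n)
  let H (x : PrimeSylow G) := groupCohomology (Rep.trivial k (x.2 : Subgroup G) V) (n + 1)
  exact ⟨e₁ ≪≫ₗ LinearEquiv.piCongrRight e₂ ≪≫ₗ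
    (LinearEquiv.piCurry k fun (j : ι) (x : {x : PrimeSylow G // x.2 ≤ M j}) => H x.1).symm ≪≫ₗ
    LinearEquiv.piCongrLeft k (fun x => H x) E ≪≫ₗ
    (DirectSum.linearEquivFunOnFintype k (PrimeSylow G) fun x => H x).symm⟩

section TransitivelyCommutative

variable {G : Type*} [Group G]

variable (G) in
/-- A group is transitively commutative (TC) if the centralizer of every element outside the center
is abelian. -/
def IsTransitivelyCommutative : Prop :=
  ∀ g : G, g ∉ Subgroup.center G →
    ∀ x ∈ Subgroup.centralizer {g}, ∀ y ∈ Subgroup.centralizer {g}, x * y = y * x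

/-- A maximal abelian subgroup: maximal for inclusion among the abelian subgroups of `G`. -/
def IsMaximalAbelian (A : Subgroup G) : Prop :=
  (∀ x ∈ A, ∀ y ∈ A, x * y = y * x) ∧
    ∀ B : Subgroup G, (∀ x ∈ B, ∀ y ∈ B, x * y = y * x) → A ≤ B → A = B

lemma IsMaximalAbelian.isNilpotent {A : Subgroup G} (hA : IsMaximalAbelian A) :
    Group.IsNilpotent A :=
  letI : CommGroup A := { mul_comm := fun x y => Subtype.ext (hA.1 x x.2 y y.2) }
  CommGroup.isNilpotent

lemma IsTransitivelyCommutative.isMaximalAbelian_centralizer (hTC : IsTransitivelyCommutative G)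
    {g : G} (hg : g ∉ Subgroup.center G) : IsMaximalAbelian (Subgroup.centralizer {g}) := by
  refine ⟨hTC g hg, fun B hB hle => hle.antisymm fun x hx => ?_⟩
  rw [Subgroup.mem_centralizer_singleton_iff]
  exact hB x hx g (hle (Subgroup.mem_centralizer_singleton_iff.2 rfl))

lemma IsMaximalAbelian.eq_centralizer (hTC : IsTransitivelyCommutative G) {A : Subgroup G}
    (hA : IsMaximalAbelian A) {g : G} (hg : g ∉ Subgroup.center G) (hgA : g ∈ A) :
    A = Subgroup.centralizer {g} :=
  hA.2 _ (hTC g hg) fun x hx => Subgroup.mem_centralizer_singleton_iff.2 (hA.1 x hx g hgA)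

lemma IsMaximalAbelian.inf_le_center (hTC : IsTransitivelyCommutative G) {A B : Subgroup G}
    (hA : IsMaximalAbelian A) (hB : IsMaximalAbelian B) (hAB : A ≠ B) :
    A ⊓ B ≤ Subgroup.center G := fun _ hg => by_contra fun hgc =>
  hAB ((hA.eq_centralizer hTC hgc hg.1).trans (hB.eq_centralizer hTC hgc hg.2).symm)

lemma exists_ne_one_le_centralizer_of_isPGroup {p : ℕ} [Fact p.Prime] {P : Subgroup G} [Finite P]
    (hP : IsPGroup p P) (hne : P ≠ ⊥) : ∃ z ≠ 1, P ≤ Subgroup.centralizer {z} := by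
  have := (Subgroup.nontrivial_iff_ne_bot P).2 hne
  have := hP.center_nontrivial
  obtain ⟨⟨z, hz⟩, hz1⟩ := exists_ne (1 : Subgroup.center P)
  refine ⟨z, fun h => hz1 (Subtype.ext (Subtype.ext h)), fun x hx => ?_⟩
  rw [Subgroup.mem_centralizer_singleton_iff]
  exact congrArg Subtype.val (Subgroup.mem_center_iff.1 hz ⟨x, hx⟩)

lemma IsTransitivelyCommutative.exists_isMaximalAbelian_ge (hTC : IsTransitivelyCommutative G)
    (hZ : Subgroup.center G = ⊥) {p : ℕ} [Fact p.Prime] {P : Subgroup G} [Finite P]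
    (hP : IsPGroup p P) (hne : P ≠ ⊥) : ∃ A, IsMaximalAbelian A ∧ P ≤ A := by
  obtain ⟨z, hz, hPz⟩ := exists_ne_one_le_centralizer_of_isPGroup hP hne
  exact ⟨_, hTC.isMaximalAbelian_centralizer (by rwa [hZ, Subgroup.mem_bot]), hPz⟩

end TransitivelyCommutative

theorem tc_free_product_cohomology_eq_directSum_of_sylow_cohomology_general
    {k V G ι : Type u} [CommRing k] [AddCommGroup V] [Module k V] [Group G] [Fintype G]
    (hTC : IsTransitivelyCommutative G) (hZ : Subgroup.center G = ⊥) {M : ι → Subgroup G}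
    (hinj : Function.Injective M) (hmax : ∀ j, IsMaximalAbelian (M j))
    (hall : ∀ A : Subgroup G, IsMaximalAbelian A → ∃ j, A = M j) {i : ℕ} (hi : 0 < i) :
    Nonempty (groupCohomology (Rep.trivial k (Monoid.CoprodI fun j => M j) V) i ≃ₗ[k]
      ⨁ x : PrimeSylow G, groupCohomology (Rep.trivial k (x.2 : Subgroup G) V) i) := by
  have (j : ι) := (hmax j).isNilpotent
  have hdisj : Pairwise fun j l => Disjoint (M j) (M l) := fun j l hjl =>
    disjoint_iff_inf_le.2 (hZ ▸ (hmax j).inf_le_center hTC (hmax l) (hinj.ne hjl))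
  have hSylow (x : PrimeSylow G) : ∃ j, x.2 ≤ M j := by
    have := x.fact_prime
    obtain ⟨A, hA, hle⟩ := hTC.exists_isMaximalAbelian_ge hZ x.2.isPGroup' x.ne_bot
    obtain ⟨j, rfl⟩ := hall A hA
    exact ⟨j, hle⟩
  exact nonempty_groupCohomology_coprodI_linearEquiv_directSum_primeSylow M hdisj hSylow hi

/-- For a finite nonabelian transitively commutative group `G` with trivial
center whose maximal abelian subgroups are `M 1, …, M N`, the group cohomology
(with trivial `ℤ` coefficients) of the free product `P` of the `M j` in
positive degrees is the direct sum, over the primes `p` dividing `|G|` and the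
Sylow `p`-subgroups `Q` of `G`, of the cohomology of `Q`. -/
theorem tc_free_product_cohomology_eq_directSum_of_sylow_cohomology
    (G : Type) [Group G] [Fintype G]
    (hnonab : ¬ ∀ a b : G, a * b = b * a)
    (hTC : ∀ g : G, g ∉ Subgroup.center G →
      ∀ x ∈ Subgroup.centralizer {g}, ∀ y ∈ Subgroup.centralizer {g}, x * y = y * x)
    (hZ : Subgroup.center G = ⊥)
    (N : ℕ) (M : Fin N → Subgroup G)
    (hinj : Function.Injective M)
    (hmax : ∀ j, (∀ x ∈ M j, ∀ y ∈ M j, x * y = y * x) ∧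
      ∀ N' : Subgroup G, (∀ x ∈ N', ∀ y ∈ N', x * y = y * x) → M j ≤ N' → M j = N')
    (hall : ∀ N' : Subgroup G,
      ((∀ x ∈ N', ∀ y ∈ N', x * y = y * x) ∧
        ∀ N'' : Subgroup G, (∀ x ∈ N'', ∀ y ∈ N'', x * y = y * x) → N' ≤ N'' → N' = N'') →
      ∃ j, N' = M j)
    (i : ℕ) (hi : 0 < i) :
    Nonempty
      (↥(groupCohomology (Rep.trivial ℤ (Monoid.CoprodI fun j : Fin N => ↥(M j)) ℤ) i) ≃+
        ⨁ (x : Σ p : {p : ℕ // p.Prime ∧ p ∣ Fintype.card G}, Sylow p.1 G),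
          ↥(groupCohomology (Rep.trivial ℤ ↥(x.2 : Subgroup G) ℤ) i)) := by
  exact (tc_free_product_cohomology_eq_directSum_of_sylow_cohomology_general
    (k := ℤ) (V := ℤ) hTC hZ hinj hmax hall hi).map AddEquivClass.toAddEquiv
end
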